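/- Let P = {P_n : n < ω} be a partition of ω into infinitely many infinite sets with min P_i < min P_j whenever i < j, and let I = (I_n)_{n<ω} be a sequence of subsets of ω with n ∈ I_n for all n. Then a subset 𝓧 ⊆ 𝓔^{P,I}_∞ has the property of Baire with respect to the Ellentuck topology if and only if 𝓧 is Ramsey; moreover, 𝓧 is Ellentuck-meagre if and only if 𝓧 is Ramsey null. (That is, (𝓔^{P,I}_∞, ≤, r) is a topological Ramsey space.) -/

import Mathlib

open Set

namespace DualRamsey

/-- `F` is a coarsening of `E` (written `F ≤ E` in the paper): every class of `F`
is a union of classes of `E`. -/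
def Coarsens {X : Type*} (F E : Setoid X) : Prop := ∀ a b, E.r a b → F.r a b

/-- The set of equivalence classes of a setoid. -/
def classes {X : Type*} (E : Setoid X) : Set (Set X) := {C | ∃ x, C = {y | E.r x y}}

/-- The set of minimal representatives of the classes of an equivalence relation on ℕ. -/
def minReps (E : Setoid ℕ) : Set ℕ := {n | ∀ m, E.r n m → n ≤ m}

/-- `pRep E k` is `p_k(E)`, the k-th minimal representative in increasing order. -/
noncomputable def pRep (E : Setoid ℕ) (k : ℕ) : ℕ := Nat.nth (· ∈ minReps E) k

/-- `approx n E` is the n-th approximation `r_n(E)`: `E` restricted to `{0,…,p_n(E)-1}`,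
identified with its graph. -/
noncomputable def approx (n : ℕ) (E : Setoid ℕ) : Set (ℕ × ℕ) :=
  {q | q.1 < pRep E n ∧ q.2 < pRep E n ∧ E.r q.1 q.2}

/-- Basic set `[a, E]` relative to a space `S` of equivalence relations. -/
noncomputable def basicSet (S : Set (Setoid ℕ)) (a : Set (ℕ × ℕ)) (E : ↥S) : Set ↥S :=
  {F | Coarsens F.1 E.1 ∧ ∃ n, approx n F.1 = a}

/-- The Ellentuck topology on a space `S` of equivalence relations. -/
noncomputable def ellentuckTop (S : Set (Setoid ℕ)) : TopologicalSpace ↥S :=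
  TopologicalSpace.generateFrom {U | ∃ a E, U = basicSet S a E}

def IsRamsey (S : Set (Setoid ℕ)) (X : Set ↥S) : Prop :=
  ∀ (a : Set (ℕ × ℕ)) (B : ↥S), (basicSet S a B).Nonempty →
    ∃ A ∈ basicSet S a B, basicSet S a A ⊆ X ∨ basicSet S a A ∩ X = ∅

def IsRamseyNull (S : Set (Setoid ℕ)) (X : Set ↥S) : Prop :=
  ∀ (a : Set (ℕ × ℕ)) (B : ↥S), (basicSet S a B).Nonempty →
    ∃ A ∈ basicSet S a B, basicSet S a A ∩ X = ∅

/-- The property of Baire with respect to the Ellentuck topology. -/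
noncomputable def HasBP (S : Set (Setoid ℕ)) (X : Set ↥S) : Prop :=
  ∃ O M : Set ↥S, (ellentuckTop S).IsOpen O ∧ @IsMeagre _ (ellentuckTop S) M ∧
    X = (O \ M) ∪ (M \ O)

/-- The Souslin operation applied to a scheme indexed by finite sequences of naturals. -/
def souslinOp {X : Type*} (A : List ℕ → Set X) : Set X :=
  ⋃ x : ℕ → ℕ, ⋂ n : ℕ, A ((List.range n).map x)

/-- `Y` belongs to the smallest field of sets containing all `t`-open sets and
closed under the Souslin operation. -/
def SouslinMeasurable {X : Type*} (t : TopologicalSpace X) (Y : Set X) : Prop :=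
  ∀ 𝒜 : Set (Set X),
    (∀ U, t.IsOpen U → U ∈ 𝒜) →
    (∀ A ∈ 𝒜, Aᶜ ∈ 𝒜) →
    (∀ A ∈ 𝒜, ∀ B ∈ 𝒜, A ∪ B ∈ 𝒜) →
    (∀ f : List ℕ → Set X, (∀ s, f s ∈ 𝒜) → souslinOp f ∈ 𝒜) →
    Y ∈ 𝒜

/-- The graph of an equivalence relation as a boolean-valued function. -/
noncomputable def graphMap {X : Type*} (E : Setoid X) : X × X → Bool :=
  fun q => @decide (E.r q.1 q.2) (Classical.dec _)

/-- The metrizable topology on a space of equivalence relations, as a subspace of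
`2^(X × X)` via graphs. -/
noncomputable def graphTop {X : Type*} (S : Set (Setoid X)) : TopologicalSpace ↥S :=
  TopologicalSpace.induced (fun E => graphMap E.1) inferInstance

/-- `σ(k)`: the largest `n` such that `2^n` divides `k+1`. -/
def sigmaSeq (k : ℕ) : ℕ := padicValNat 2 (k + 1)

/-- `𝓔^P_∞` for a partition `P` of ℕ into infinitely many infinite pieces: the
`P`-alternating equivalence relations, i.e. those with infinitely many classes whose
`k`-th minimal representative lies in `P (σ k)`. -/
noncomputable def EPaltInf (P : ℕ → Set ℕ) : Set (Setoid ℕ) :=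
  {E | (classes E).Infinite ∧ ∀ k : ℕ, pRep E k ∈ P (sigmaSeq k)}

/-- `𝓔^{P,I}_∞`: the `P`-alternating equivalence relations such that moreover every
class whose minimum lies in `P n` is contained in `⋃ {P m : m ∈ I n}`. -/
noncomputable def EPaltI (P : ℕ → Set ℕ) (I : ℕ → Set ℕ) : Set (Setoid ℕ) :=
  {E | E ∈ EPaltInf P ∧
    ∀ x ∈ minReps E, ∀ n, x ∈ P n → ∀ y, E.r x y → ∃ m ∈ I n, y ∈ P m}

/-!
An equivalence relation on `ω` is the same as the retraction of `ω` sending every point to the least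
element of its class, and coarsening becomes composition of retractions. The pigeonhole principle
for the next approximation then is a typed form of the Carlson–Simpson theorem: every later class is
either merged into one of the first `l` classes (a letter) or kept for the next approximation (a
variable), and the letters available at a position are the classes permitted by `I`. The
Carlson–Simpson theorem itself follows from the Hales–Jewett theorem by a fusion argument.

Below an approximation that cannot absorb all later classes, a class that can never be merged
becomes part of every further approximation. Repeating this either leads to an approximation that
can absorb every later class, where the pigeonhole principle and amalgamation hold, or
shrinks the basic set to a single point. In the first case combinatorial forcing shows that open
sets are Ramsey, and a fusion that handles the finitely many approximations of each length shows
that countable unions of Ramsey null sets are Ramsey null; the second case is trivial.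
-/

open Filter

theorem exists_seq {α : Type*} {p : α → Prop} {r : ℕ → α → α → Prop} {a : α} (ha : p a)
    (step : ∀ n x, p x → ∃ y, p y ∧ r n x y) :
    ∃ f : ℕ → α, f 0 = a ∧ ∀ n, p (f n) ∧ r n (f n) (f (n + 1)) := by
  choose! next hnext using step
  let f : ℕ → α := fun n => Nat.rec a next n
  have hp : ∀ n, p (f n) := fun n => Nat.rec ha (fun n ih => (hnext n _ ih).1) n
  exact ⟨f, rfl, fun n => ⟨hp n, (hnext n _ (hp n)).2⟩⟩

theorem exists_block {s : ℕ → ℕ} (hs : StrictMono s) {i : ℕ} (hi : s 0 ≤ i) :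
    ∃ n, s n ≤ i ∧ i < s (n + 1) := by
  classical
  have hex : ∃ n, i < s (n + 1) := ⟨i, hs.le_apply (x := i + 1)⟩
  refine ⟨Nat.find hex, ?_, Nat.find_spec hex⟩
  rcases hn : Nat.find hex with _ | n
  · exact hi
  · exact not_lt.1 (Nat.find_min hex (m := n) (by omega))

theorem block_unique {s : ℕ → ℕ} (hs : StrictMono s) {i m n : ℕ} (hm : s m ≤ i)
    (hm' : i < s (m + 1)) (hn : s n ≤ i) (hn' : i < s (n + 1)) : m = n := by
  have h₁ := hs.lt_iff_lt.1 (hm.trans_lt hn')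
  have h₂ := hs.lt_iff_lt.1 (hn.trans_lt hm')
  omega

theorem exists_eq_on_blocks {α : Type*} {s : ℕ → ℕ} (hs : StrictMono s) (f : ℕ → ℕ → α) :
    ∃ g : ℕ → α, (∀ i, ∃ n, g i = f n i) ∧ ∀ n i, s n ≤ i → i < s (n + 1) → g i = f n i := by
  choose! b hb hb' using fun i (hi : s 0 ≤ i) => exists_block hs hi
  refine ⟨fun i => f (b i) i, fun i => ⟨b i, rfl⟩, fun n i hn hn' => ?_⟩
  have h0 : s 0 ≤ i := (hs.monotone n.zero_le).trans hn
  simp only [block_unique hs (hb i h0) (hb' i h0) hn hn']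

theorem eqOn_Iio_of_le {α : Type*} {f : ℕ → ℕ → α} {s : ℕ → ℕ} (hs : Monotone s)
    (h : ∀ n, EqOn (f (n + 1)) (f n) (Iio (s n))) {m n : ℕ} (hmn : m ≤ n) :
    EqOn (f n) (f m) (Iio (s m)) := by
  induction n, hmn using Nat.le_induction with
  | base => exact eqOn_refl _ _
  | succ n hmn ih => exact ((h n).mono (Iio_subset_Iio (hs hmn))).trans ih

theorem exists_eqOn_limit {α : Type*} {f : ℕ → ℕ → α} {s : ℕ → ℕ} (hs : StrictMono s)
    (h : ∀ n, EqOn (f (n + 1)) (f n) (Iio (s n))) : ∃ g, ∀ n, EqOn g (f n) (Iio (s n)) := by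
  refine ⟨fun i => f (i + 1) i, fun n i hi => ?_⟩
  have hi' : i ∈ Iio (s (i + 1)) := hs.le_apply (x := i + 1)
  rcases le_total (i + 1) n with hn | hn
  · exact (eqOn_Iio_of_le hs.monotone h hn hi').symm
  · exact eqOn_Iio_of_le hs.monotone h hn hi

/-- `splice s u w` follows `u` below `s` and `w` from `s` on. -/
def splice {α : Type*} (s : ℕ) (u w : ℕ → α) (j : ℕ) : α := if j < s then u j else w j

theorem splice_of_lt {α : Type*} {s j : ℕ} (u w : ℕ → α) (h : j < s) : splice s u w j = u j :=
  if_pos h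

theorem splice_of_le {α : Type*} {s j : ℕ} (u w : ℕ → α) (h : s ≤ j) : splice s u w j = w j :=
  if_neg h.not_gt

/-- `F` is constant on the fibres of `E`. When `E` and `F` send a point to the least element of its
class for two equivalence relations on `ℕ`, this says that the relation of `F` is coarser. -/
def Coarser {α : Type*} (F : ℕ → α) (E : ℕ → ℕ) : Prop := ∀ x, F (E x) = F x

theorem Coarser.trans {α : Type*} {G : ℕ → α} {F E : ℕ → ℕ} (h : Coarser G F) (h' : Coarser F E) :
    Coarser G E := fun x => by rw [← h (E x), h' x, h x]

theorem Coarser.fixed {F E : ℕ → ℕ} (h : Coarser F E) (hF : ∀ x, F x ≤ x) (hE : ∀ x, E x ≤ x)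
    {x : ℕ} (hx : F x = x) : E x = x :=
  (hE x).antisymm <| calc
    x = F (E x) := by rw [h x, hx]
    _ ≤ E x := hF _

/-! ### The Carlson–Simpson theorem -/

section CarlsonSimpson

/-- The combinatorial setting of the Carlson–Simpson theorem. Position `j` has the type
`type j` and may be filled with a letter from `letters j`. Letters are coded by the numbers
`< size`; the corresponding initial positions are reserved for them. -/
structure TypedAlphabet where
  type : ℕ → ℕ
  size : ℕ
  letters : ℕ → Finset ℕ
  letters_nonempty : ∀ j, (letters j).Nonempty
  lt_size : ∀ {j a}, a ∈ letters j → a < size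
  letters_of_lt : ∀ {a}, a < size → letters a = {a}
  frequently_type : ∀ m, ∃ᶠ j in atTop, type j = m

variable {𝒜 : TypedAlphabet} {h h' h'' u w ρ α : ℕ → ℕ} {s s' k m τ : ℕ}
  {D D' : ℕ → (ℕ → ℕ) → Prop}

/-- A word with infinitely many variables, encoded as a retraction of `ℕ`: `h j < size` means that
the letter `h j` stands at `j`, and otherwise `h j` is the first position of the variable
standing at `j`. The occurrences of a variable all precede the first occurrence of the next one. -/
structure VarWord (𝒜 : TypedAlphabet) (h : ℕ → ℕ) : Prop where
  le : ∀ j, h j ≤ j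
  idem : ∀ j, h (h j) = h j
  letter_mem : ∀ {j}, h j < 𝒜.size → h j ∈ 𝒜.letters j
  type_eq : ∀ {j}, 𝒜.size ≤ h j → 𝒜.type (h j) = 𝒜.type j
  letters_eq : ∀ {j}, 𝒜.size ≤ h j → 𝒜.letters (h j) = 𝒜.letters j
  block : ∀ {j k}, 𝒜.size ≤ h j → h j < k → k ≤ j → h k ≠ k

/-- A variable word in which variables of every type begin infinitely often. -/
structure InfVarWord (𝒜 : TypedAlphabet) (h : ℕ → ℕ) : Prop extends VarWord 𝒜 h where
  frequently : ∀ m, ∃ᶠ j in atTop, h j = j ∧ 𝒜.type j = m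

/-- `w` arises from the variable word `h` by substituting admissible letters for the variables. -/
structure IsInstance (𝒜 : TypedAlphabet) (h w : ℕ → ℕ) : Prop where
  mem : ∀ j, w j ∈ 𝒜.letters j
  coarser : Coarser w h

/-- `u` is an instance of `h` as far as the positions below `s` are concerned. -/
structure IsHeadInstance (𝒜 : TypedAlphabet) (h : ℕ → ℕ) (s : ℕ) (u : ℕ → ℕ) : Prop where
  mem : ∀ j < s, u j ∈ 𝒜.letters j
  coarser : ∀ j < s, u (h j) = u j

/-- No variable of `h` occurs both before and after the cut point `s`. -/
structure IsCut (𝒜 : TypedAlphabet) (h : ℕ → ℕ) (s : ℕ) : Prop where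
  size_le : 𝒜.size ≤ s
  le_of_le : ∀ {j}, s ≤ j → 𝒜.size ≤ h j → s ≤ h j

/-- `h'` refines the word `h` by substitutions that leave the part of `h` below the cut point `s`
untouched. -/
structure Extends (𝒜 : TypedAlphabet) (s : ℕ) (h h' : ℕ → ℕ) : Prop where
  word : InfVarWord 𝒜 h'
  coarser : Coarser h' h
  head : EqOn h' h (Iio s)
  cut : IsCut 𝒜 h' s

namespace VarWord

theorem letter (hh : VarWord 𝒜 h) {a : ℕ} (ha : a < 𝒜.size) : h a = a := by
  have := hh.letter_mem ((hh.le a).trans_lt ha)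
  rwa [𝒜.letters_of_lt ha, Finset.mem_singleton] at this

theorem isCut (hh : VarWord 𝒜 h) (hs : h s = s) (hq : 𝒜.size ≤ s) : IsCut 𝒜 h s where
  size_le := hq
  le_of_le hj hq := not_lt.1 fun hlt => hh.block hq hlt hj hs

theorem comp (hρ : VarWord 𝒜 ρ) (hh : VarWord 𝒜 h) (hidem : ∀ j, h (ρ (h j)) = ρ (h j)) :
    VarWord 𝒜 (ρ ∘ h) where
  le j := (hρ.le _).trans (hh.le j)
  idem j := by simp only [Function.comp_apply, hidem, hρ.idem]
  letter_mem {j} hj := by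
    rcases lt_or_ge (h j) 𝒜.size with hlt | hge
    · simpa only [Function.comp_apply, hρ.letter hlt] using hh.letter_mem hlt
    · exact hh.letters_eq hge ▸ hρ.letter_mem hj
  type_eq hj := (hρ.type_eq hj).trans (hh.type_eq (hj.trans (hρ.le _)))
  letters_eq hj := (hρ.letters_eq hj).trans (hh.letters_eq (hj.trans (hρ.le _)))
  block {j k} hq hk hkj hfix := by
    have hhk : h k = k := (hh.le k).antisymm <| calc
      k = ρ (h k) := hfix.symm
      _ ≤ h k := hρ.le _
    have hρk : ρ k = k := by simpa only [Function.comp_apply, hhk] using hfix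
    rcases le_or_gt k (h j) with hle | hgt
    · exact hρ.block hq hk hle hρk
    · exact hh.block (hq.trans (hρ.le _)) hgt hkj hhk

theorem isInstance_comp (hh : VarWord 𝒜 h) {α : ℕ → ℕ} (hα : ∀ j, α j ∈ 𝒜.letters j) :
    IsInstance 𝒜 h (α ∘ h) where
  mem j := by
    rcases lt_or_ge (h j) 𝒜.size with hlt | hge
    · have : α (h j) = h j := by
        simpa only [𝒜.letters_of_lt hlt, Finset.mem_singleton] using hα (h j)
      simpa only [Function.comp_apply, this] using hh.letter_mem hlt
    · exact hh.letters_eq hge ▸ hα (h j)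
  coarser j := congrArg α (hh.idem j)

theorem exists_instance (hh : VarWord 𝒜 h) : ∃ w, IsInstance 𝒜 h w := by
  choose α hα using 𝒜.letters_nonempty
  exact ⟨_, hh.isInstance_comp hα⟩

end VarWord

namespace IsInstance

theorem letter (hw : IsInstance 𝒜 h w) {a : ℕ} (ha : a < 𝒜.size) : w a = a := by
  have := hw.mem a
  rwa [𝒜.letters_of_lt ha, Finset.mem_singleton] at this

theorem eq_of_lt_size (hw : IsInstance 𝒜 h w) {j : ℕ} (hj : h j < 𝒜.size) : w j = h j := by
  rw [← hw.coarser, hw.letter hj]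

theorem of_coarser (hw : IsInstance 𝒜 h' w) (hc : Coarser h' h) : IsInstance 𝒜 h w :=
  ⟨hw.mem, hw.coarser.trans hc⟩

theorem isHeadInstance (hw : IsInstance 𝒜 h w) (s : ℕ) : IsHeadInstance 𝒜 h s w :=
  ⟨fun j _ => hw.mem j, fun j _ => hw.coarser j⟩

end IsInstance

theorem IsHeadInstance.of_coarser (hu : IsHeadInstance 𝒜 h' s u) (hh : VarWord 𝒜 h)
    (hc : Coarser h' h) : IsHeadInstance 𝒜 h s u where
  mem := hu.mem
  coarser j hj := by
    rw [← hu.coarser (h j) ((hh.le j).trans_lt hj), hc, hu.coarser j hj]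

theorem isInstance_splice (hw : IsInstance 𝒜 h' w) (hu : IsHeadInstance 𝒜 h s u)
    (hh : VarWord 𝒜 h) (hs : IsCut 𝒜 h s) (he : EqOn h' h (Ici s)) :
    IsInstance 𝒜 h (splice s u w) where
  mem j := by
    rcases lt_or_ge j s with hj | hj
    · simpa only [splice_of_lt u w hj] using hu.mem j hj
    · simpa only [splice_of_le u w hj] using hw.mem j
  coarser j := by
    rcases lt_or_ge j s with hj | hj
    · rw [splice_of_lt u w hj, splice_of_lt u w ((hh.le j).trans_lt hj), hu.coarser j hj]
    have hwj : w (h j) = w j := he hj ▸ hw.coarser j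
    rcases lt_or_ge (h j) 𝒜.size with hlt | hge
    · have huj := hu.mem _ (hlt.trans_le hs.size_le)
      rw [𝒜.letters_of_lt hlt, Finset.mem_singleton] at huj
      rw [splice_of_lt u w (hlt.trans_le hs.size_le), splice_of_le u w hj, huj, ← hwj,
        hw.letter hlt]
    · rw [splice_of_le u w hj, splice_of_le u w (hs.le_of_le hj hge), hwj]

theorem varWord_splice (hh : VarWord 𝒜 h) (hh' : VarWord 𝒜 h') (hs : IsCut 𝒜 h' s) :
    VarWord 𝒜 (splice s h h') := by
  have hlt {j : ℕ} (hj : j < s) : splice s h h' j = h j := splice_of_lt h h' hj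
  have hge {j : ℕ} (hj : s ≤ j) : splice s h h' j = h' j := splice_of_le h h' hj
  have hcases (j : ℕ) : j < s ∨ s ≤ j ∧ h' j < 𝒜.size ∨ s ≤ j ∧ s ≤ h' j := by
    have := @hs.le_of_le j
    omega
  constructor
  all_goals
    intro j
    rcases hcases j with hj | ⟨hj, hj'⟩ | ⟨hj, hj'⟩
  · exact hlt hj ▸ hh.le j
  · exact hge hj ▸ hh'.le j
  · exact hge hj ▸ hh'.le j
  · rw [hlt hj, hlt ((hh.le j).trans_lt hj), hh.idem]
  · rw [hge hj, hlt (hj'.trans_le hs.size_le), hh.letter hj']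
  · rw [hge hj, hge hj', hh'.idem]
  · rw [hlt hj]; exact hh.letter_mem
  · rw [hge hj]; exact hh'.letter_mem
  · rw [hge hj]; exact hh'.letter_mem
  · rw [hlt hj]; exact hh.type_eq
  · rw [hge hj]; exact hh'.type_eq
  · rw [hge hj]; exact hh'.type_eq
  · rw [hlt hj]; exact hh.letters_eq
  · rw [hge hj]; exact hh'.letters_eq
  · rw [hge hj]; exact hh'.letters_eq
  · intro k hq hk hkj
    rw [hlt hj] at hq hk
    exact hlt (hkj.trans_lt hj) ▸ hh.block hq hk hkj
  · intro k hq
    rw [hge hj] at hq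
    omega
  · intro k hq hk hkj
    rw [hge hj] at hq hk
    exact hge (hj'.trans hk.le) ▸ hh'.block hq hk hkj

namespace Extends

theorem refl (hh : InfVarWord 𝒜 h) (hs : IsCut 𝒜 h s) : Extends 𝒜 s h h :=
  ⟨hh, hh.idem, eqOn_refl _ _, hs⟩

theorem trans (h₁ : Extends 𝒜 s h h') (h₂ : Extends 𝒜 s h' h'') : Extends 𝒜 s h h'' :=
  ⟨h₂.word, h₂.coarser.trans h₁.coarser, h₂.head.trans h₁.head, h₂.cut⟩

theorem mono (he : Extends 𝒜 s' h h') (hs : IsCut 𝒜 h s) (hss : s ≤ s') : Extends 𝒜 s h h' where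
  word := he.word
  coarser := he.coarser
  head := he.head.mono (Iio_subset_Iio hss)
  cut := by
    refine ⟨hs.size_le, fun {j} hj hq => ?_⟩
    rw [← he.coarser] at hq ⊢
    have hle := he.word.le (h j)
    have hsj : s ≤ h j := hs.le_of_le hj (hq.trans hle)
    rcases lt_or_ge (h j) s' with hlt | hge
    · rw [he.head hlt] at hq ⊢
      exact hs.le_of_le hsj hq
    · exact hss.trans (he.cut.le_of_le hge hq)

theorem fixed (he : Extends 𝒜 s h h') (hh : VarWord 𝒜 h) {j : ℕ} (hj : h' j = j) : h j = j :=
  he.coarser.fixed he.word.le hh.le hj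

end Extends

/-- A property of a position `d` and a sequence of letters that depends only on the letters
below `d`. -/
def IsLocal (D : ℕ → (ℕ → ℕ) → Prop) : Prop :=
  ∀ ⦃d w w'⦄, EqOn w w' (Iio d) → D d w → D d w'

/-- `D` holds of `w` whatever instance of the part of `h` below `s` replaces the part of `w`
below `s`. -/
def ForallHead (𝒜 : TypedAlphabet) (D : ℕ → (ℕ → ℕ) → Prop) (h : ℕ → ℕ) (s : ℕ) (d : ℕ)
    (w : ℕ → ℕ) : Prop :=
  ∀ u, IsHeadInstance 𝒜 h s u → D d (splice s u w)

/-- Every extension of `h` beyond `s` has a variable of type `τ` and an instance such that `D`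
holds of the first position of the variable and the instance. -/
def Large (𝒜 : TypedAlphabet) (τ : ℕ) (D : ℕ → (ℕ → ℕ) → Prop) (s : ℕ) (h : ℕ → ℕ) : Prop :=
  ∀ h', Extends 𝒜 s h h' → ∃ d ≥ s, h' d = d ∧ 𝒜.type d = τ ∧ ∃ w, IsInstance 𝒜 h' w ∧ D d w

theorem IsLocal.forallHead (hD : IsLocal D) (h : ℕ → ℕ) (s : ℕ) :
    IsLocal (ForallHead 𝒜 D h s) := by
  intro d w w' hw H u hu
  refine hD (fun j hj => ?_) (H u hu)
  simp only [splice, hw hj]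

theorem ForallHead.congr_tail {d : ℕ} {w' : ℕ → ℕ} (H : ForallHead 𝒜 D h s d w)
    (hw : EqOn w w' (Ici s)) : ForallHead 𝒜 D h s d w' := by
  intro u hu
  convert H u hu using 1
  funext j
  simp only [splice]
  split_ifs with hj
  exacts [rfl, (hw (not_lt.1 hj)).symm]

theorem ForallHead.of_coarser {d : ℕ} (H : ForallHead 𝒜 D h s d w) (hh : VarWord 𝒜 h)
    (hc : Coarser h' h) : ForallHead 𝒜 D h' s d w :=
  fun u hu => H u (hu.of_coarser hh hc)

theorem Large.mono (H : Large 𝒜 τ D s h) (hD : ∀ d w, D d w → D' d w) : Large 𝒜 τ D' s h := by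
  intro h' he
  obtain ⟨d, hd, hfix, hτ, w, hw, hDw⟩ := H h' he
  exact ⟨d, hd, hfix, hτ, w, hw, hD d w hDw⟩

theorem exists_large_of_finset {κ : Type*} (Dc : κ → ℕ → (ℕ → ℕ) → Prop) (S : Finset κ)
    (hh : InfVarWord 𝒜 h) (hs : IsCut 𝒜 h s)
    (hc : Large 𝒜 τ (fun d w => ∃ c ∈ S, Dc c d w) s h) :
    ∃ c ∈ S, ∃ h', Extends 𝒜 s h h' ∧ Large 𝒜 τ (Dc c) s h' := by
  induction S using Finset.cons_induction generalizing h with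
  | empty =>
    obtain ⟨d, -, -, -, w, -, c, hc, -⟩ := hc h (.refl hh hs)
    exact absurd hc (Finset.notMem_empty c)
  | cons c S _ ih =>
    by_cases hl : Large 𝒜 τ (Dc c) s h
    · exact ⟨c, Finset.mem_cons_self c _, h, .refl hh hs, hl⟩
    simp only [Large, not_forall] at hl
    obtain ⟨h₁, he₁, hfail⟩ := hl
    obtain ⟨c', hc', h₂, he₂, hl₂⟩ := ih he₁.word he₁.cut fun h₂ he₂ => by
      obtain ⟨d, hd, hfix, hτ, w, hw, c', hc', hDw⟩ := hc h₂ (he₁.trans he₂)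
      refine ⟨d, hd, hfix, hτ, w, hw, c', (Finset.mem_cons.1 hc').resolve_left ?_, hDw⟩
      rintro rfl
      exact hfail ⟨d, hd, he₂.fixed he₁.word.toVarWord hfix, hτ, w,
        hw.of_coarser he₂.coarser, hDw⟩
    exact ⟨c', Finset.mem_cons_of_mem hc', h₂, he₁.trans he₂, hl₂⟩

theorem Extends.splice {g : ℕ → ℕ} (hg : Extends 𝒜 s (ρ ∘ h) g) (hh : VarWord 𝒜 h)
    (hs : IsCut 𝒜 h s) (hρ : VarWord 𝒜 ρ) (hρs : EqOn ρ id (Ici s)) :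
    Extends 𝒜 s h (splice s h g) where
  word := by
    refine ⟨varWord_splice hh hg.word.toVarWord hg.cut, fun m => ?_⟩
    refine ((hg.word.frequently m).and_eventually (eventually_ge_atTop s)).mono fun j hj => ?_
    rw [splice_of_le h g hj.2]
    exact hj.1
  head j hj := splice_of_lt h g hj
  cut := by
    refine ⟨hs.size_le, fun {j} hj => ?_⟩
    rw [splice_of_le h g hj]
    exact hg.cut.le_of_le hj
  coarser j := by
    rcases lt_or_ge j s with hj | hj
    · rw [splice_of_lt h g hj, splice_of_lt h g ((hh.le j).trans_lt hj), hh.idem]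
    have hgj : g (ρ (h j)) = g j := hg.coarser j
    rw [splice_of_le h g hj]
    rcases lt_or_ge (h j) 𝒜.size with hlt | hge
    · rw [hρ.letter hlt, hg.word.letter hlt] at hgj
      rw [splice_of_lt h g (hlt.trans_le hs.size_le), hh.idem, hgj]
    · have hsj := hs.le_of_le hj hge
      rw [splice_of_le h g hsj, ← hgj, hρs hsj, id]

/-- Substituting letters and variables for variables below the cut does not affect largeness,
because `ForallHead` does not depend on the part below the cut. -/
theorem Large.comp {h₀ : ℕ → ℕ} (H : Large 𝒜 τ (ForallHead 𝒜 D h₀ s) s h) (hh : VarWord 𝒜 h)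
    (hs : IsCut 𝒜 h s) (hρ : VarWord 𝒜 ρ) (hρs : EqOn ρ id (Ici s)) :
    Large 𝒜 τ (ForallHead 𝒜 D h₀ s) s (ρ ∘ h) := by
  intro g hg
  obtain ⟨d, hd, hfix, hτ, w, hw, hDw⟩ := H _ (hg.splice hh hs hρ hρs)
  obtain ⟨v, hv⟩ := hg.word.exists_instance
  have hge : EqOn (splice s h g) g (Ici s) := fun j hj => splice_of_le h g hj
  exact ⟨d, hd, hge hd ▸ hfix, hτ, splice s v w,
    isInstance_splice hw (hv.isHeadInstance s) hg.word.toVarWord hg.cut hge,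
    hDw.congr_tail fun j hj => (splice_of_le v w hj).symm⟩

theorem IsCut.comp (hρ : IsCut 𝒜 ρ s) (hs : IsCut 𝒜 h s) (hle : ∀ j, ρ j ≤ j) :
    IsCut 𝒜 (ρ ∘ h) s where
  size_le := hs.size_le
  le_of_le hj hq := hρ.le_of_le (hs.le_of_le hj (hq.trans (hle _))) hq

theorem Extends.comp (hh : InfVarWord 𝒜 h) (hs : IsCut 𝒜 h s) (hρ : VarWord 𝒜 ρ)
    (hρs : IsCut 𝒜 ρ s) (hid : EqOn ρ id (Iio s)) (hidem : ∀ j, h (ρ (h j)) = ρ (h j))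
    (hfreq : ∀ m, ∃ᶠ j in atTop, ρ j = j ∧ h j = j ∧ 𝒜.type j = m) :
    Extends 𝒜 s h (ρ ∘ h) where
  word := by
    refine ⟨hρ.comp hh.toVarWord hidem, fun m => (hfreq m).mono fun j hj => ⟨?_, hj.2.2⟩⟩
    rw [Function.comp_apply, hj.2.1, hj.1]
  coarser j := congrArg ρ (hh.idem j)
  head j hj := hid ((hh.le j).trans_lt hj)
  cut := hρs.comp hs hρ.le

open Classical in
/-- The substitution of the letter `α i` for the variable beginning at `i`, for every `i ∉ Z`. -/
noncomputable def freeze (Z : Set ℕ) (α : ℕ → ℕ) (i : ℕ) : ℕ := if i ∈ Z then i else α i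

theorem freeze_of_mem {Z : Set ℕ} {i : ℕ} (hi : i ∈ Z) : freeze Z α i = i := if_pos hi

theorem freeze_of_notMem {Z : Set ℕ} {i : ℕ} (hi : i ∉ Z) : freeze Z α i = α i := if_neg hi

section Freeze

variable {Z : Set ℕ} (hα : ∀ i, α i ∈ 𝒜.letters i)
include hα

theorem freeze_eq_or (i : ℕ) : freeze Z α i = i ∨ freeze Z α i = α i ∧ α i < 𝒜.size := by
  by_cases hi : i ∈ Z
  · exact .inl (freeze_of_mem hi)
  · exact .inr ⟨freeze_of_notMem hi, 𝒜.lt_size (hα i)⟩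

theorem freeze_letter {a : ℕ} (ha : a < 𝒜.size) : freeze Z α a = a := by
  have := hα a
  rw [𝒜.letters_of_lt ha, Finset.mem_singleton] at this
  rcases freeze_eq_or hα a with h | h
  exacts [h, h.1.trans this]

theorem freeze_eq_of_size_le {i : ℕ} (hi : 𝒜.size ≤ freeze Z α i) : freeze Z α i = i := by
  have := freeze_eq_or (Z := Z) hα i
  omega

theorem varWord_freeze : VarWord 𝒜 (freeze Z α) where
  le j := by
    by_contra! hlt
    have := freeze_eq_or (Z := Z) hα j
    have := freeze_letter (Z := Z) (a := j) hα
    omega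
  idem j := by
    rcases freeze_eq_or (Z := Z) hα j with hj | ⟨hj, hlt⟩
    · rw [hj, hj]
    · rw [hj, freeze_letter hα hlt]
  letter_mem {j} hj := by
    by_cases hZ : j ∈ Z
    · rw [freeze_of_mem hZ] at hj ⊢
      exact 𝒜.letters_of_lt hj ▸ Finset.mem_singleton_self j
    · exact (freeze_of_notMem (α := α) hZ).symm ▸ hα j
  type_eq hj := by rw [freeze_eq_of_size_le hα hj]
  letters_eq hj := by rw [freeze_eq_of_size_le hα hj]
  block hj hlt hle := by
    rw [freeze_eq_of_size_le hα hj] at hlt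
    omega

theorem extends_freeze (hh : InfVarWord 𝒜 h) (hs : IsCut 𝒜 h s) (hZ : Iio s ⊆ Z)
    (hfreq : ∀ m, ∃ᶠ j in atTop, j ∈ Z ∧ h j = j ∧ 𝒜.type j = m) :
    Extends 𝒜 s h (freeze Z α ∘ h) := by
  refine .comp hh hs (varWord_freeze hα) ⟨hs.size_le, fun hj hq => ?_⟩
    (fun j hj => freeze_of_mem (hZ hj)) (fun j => ?_)
    fun m => (hfreq m).mono fun j hj => ⟨freeze_of_mem hj.1, hj.2⟩
  · rwa [freeze_eq_of_size_le hα hq]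
  · rcases freeze_eq_or (Z := Z) hα (h j) with hj | ⟨hj, hlt⟩
    · rw [hj, hh.idem]
    · rw [hj, hh.letter hlt]

theorem IsInstance.eq_of_notMem_freeze (hw : IsInstance 𝒜 (freeze Z α ∘ h) w)
    {i : ℕ} (hi : h i ∉ Z) : w i = α (h i) := by
  have hval : (freeze Z α ∘ h) i = α (h i) := freeze_of_notMem hi
  rw [hw.eq_of_lt_size (hval ▸ 𝒜.lt_size (hα _)), hval]

end Freeze

theorem exists_frozen_blocks (hh : InfVarWord 𝒜 h) (hs : IsCut 𝒜 h s) {d z k : ℕ → ℕ}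
    {W : ℕ → ℕ → ℕ} (hd : ∀ n, d n < z n ∧ z n < k n ∧ k n ≤ d (n + 1)) (hd0 : s ≤ d 0)
    (hdτ : ∀ n, h (d (n + 1)) = d (n + 1) ∧ 𝒜.type (d (n + 1)) = τ)
    (hz : ∀ n, h (z n) = z n ∧ 𝒜.type (z n) = n.unpair.1) (hk : ∀ n, h (k n) = k n)
    (hW : ∀ n, IsInstance 𝒜 h (W n)) :
    ∃ h', Extends 𝒜 s h h' ∧ (∀ j ≥ s, h' j = j → 𝒜.type j = τ → ∃ n, j = d (n + 1)) ∧
      ∀ n w, IsInstance 𝒜 h' w → ∀ j, k n ≤ j → j < d (n + 1) → w j = W n j := by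
  have hmono : StrictMono fun n => d n + 1 := strictMono_nat_of_lt_succ fun n => by grind
  have hds (n : ℕ) : s ≤ d n := hd0.trans (Nat.le_of_succ_le_succ (hmono.monotone n.zero_le))
  obtain ⟨α, hα, hαW⟩ := exists_eq_on_blocks hmono W
  have hαmem (i : ℕ) : α i ∈ 𝒜.letters i := by
    obtain ⟨n, hn⟩ := hα i
    exact hn ▸ (hW n).mem i
  let Z : Set ℕ := {i | i < s ∨ ∃ n, i = d (n + 1) ∨ i = z n ∧ 𝒜.type i ≠ τ}
  have hZ (n i : ℕ) (hki : k n ≤ i) (hid : i < d (n + 1)) : i ∉ Z := by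
    rintro (hi | ⟨m, hm⟩)
    · grind
    obtain rfl : m = n := block_unique hmono (i := i) (by grind) (by grind) (by grind) (by grind)
    grind
  have hfreq (m : ℕ) : ∃ᶠ j in atTop, j ∈ Z ∧ h j = j ∧ 𝒜.type j = m := by
    refine frequently_atTop.2 fun N => ?_
    by_cases hm : m = τ
    · have := hmono.le_apply (x := N)
      exact ⟨d (N + 1), by grind, .inr ⟨N, .inl rfl⟩, hm ▸ hdτ N⟩
    · have := hmono.le_apply (x := Nat.pair m N)
      have := Nat.right_le_pair m N
      have hzm : 𝒜.type (z (Nat.pair m N)) = m := by simp [(hz (Nat.pair m N)).2]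
      exact ⟨z (Nat.pair m N), by grind, .inr ⟨_, .inr ⟨rfl, by rwa [hzm]⟩⟩, (hz _).1, hzm⟩
  have he : Extends 𝒜 s h (freeze Z α ∘ h) :=
    extends_freeze hαmem hh hs (fun i hi => .inl hi) hfreq
  refine ⟨_, he, fun j hsj hj hjτ => ?_, fun n w hw j hkj hjd => ?_⟩
  · have hfix : h j = j := he.fixed hh.toVarWord hj
    have hjZ : j ∈ Z := by
      by_contra hjZ
      have := 𝒜.lt_size (hαmem j)
      have := hs.size_le
      rw [Function.comp_apply, hfix, freeze_of_notMem hjZ] at hj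
      omega
    grind
  · have hwh := hw.of_coarser he.coarser
    rcases lt_or_ge (h j) 𝒜.size with hlt | hge
    · rw [hwh.eq_of_lt_size hlt, (hW n).eq_of_lt_size hlt]
    have hkh : k n ≤ h j :=
      (hh.isCut (hk n) (hs.size_le.trans (by grind))).le_of_le hkj hge
    have hhd : h j < d (n + 1) := (hh.le j).trans_lt hjd
    rw [hw.eq_of_notMem_freeze hαmem (hZ n _ hkh hhd), hαW n _ (by grind) (by omega),
      (hW n).coarser]

/-- Otherwise freeze `h` block by block to instances that cannot be corrected to satisfy `D`; the
position provided by largeness then ends one of the blocks, a contradiction. -/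
theorem Large.exists_back (H : Large 𝒜 τ D s h) (hh : InfVarWord 𝒜 h) (hs : IsCut 𝒜 h s)
    (hD : IsLocal D) :
    ∃ k ≥ s, h k = k ∧ ∀ w, IsInstance 𝒜 h w → ∀ d ≥ k, h d = d → 𝒜.type d = τ →
      ∃ w', IsInstance 𝒜 h w' ∧ EqOn w' w (Ici k) ∧ D d w' := by
  by_contra! hcon
  have hstart (N m : ℕ) : ∃ j > N, h j = j ∧ 𝒜.type j = m := by
    obtain ⟨j, hj, hfix⟩ := frequently_atTop.1 (hh.frequently m) (N + 1)
    exact ⟨j, hj, hfix⟩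
  let Bad (n d d' : ℕ) : Prop := ∃ z k w, (d < z ∧ z < k ∧ k ≤ d') ∧
    (h z = z ∧ 𝒜.type z = n.unpair.1) ∧ h k = k ∧ (h d' = d' ∧ 𝒜.type d' = τ) ∧
    IsInstance 𝒜 h w ∧ ∀ w', IsInstance 𝒜 h w' → EqOn w' w (Ici k) → ¬ D d' w'
  have hbad (n d : ℕ) (hd : s ≤ d) : ∃ d', s ≤ d' ∧ Bad n d d' := by
    obtain ⟨z, hdz, hz⟩ := hstart d n.unpair.1
    obtain ⟨k, hzk, hk⟩ := hstart z 0
    obtain ⟨w, hw, d', hkd, hfix, hτ, hfail⟩ := hcon k (by omega) hk.1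
    exact ⟨d', by omega, z, k, w, ⟨hdz, hzk, hkd⟩, hz, hk.1, ⟨hfix, hτ⟩, hw, hfail⟩
  obtain ⟨d, hd0, hd⟩ := exists_seq le_rfl hbad
  choose hsd z k W hlt hz hk hdτ hW hfail using hd
  obtain ⟨h', he, hend, hval⟩ := exists_frozen_blocks hh hs hlt hd0.ge hdτ hz hk hW
  obtain ⟨e, hse, hfix, hτ, w, hw, hDw⟩ := H h' he
  obtain ⟨n, rfl⟩ := hend e hse hfix hτ
  have hcut := hh.isCut (hdτ n).1 (hs.size_le.trans (hsd _))
  refine hfail n _ (isInstance_splice (hW n)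
    ((hw.of_coarser he.coarser).isHeadInstance _) hh.toVarWord hcut (eqOn_refl _ _))
    (fun j hj => ?_) (hD (fun j hj => (splice_of_lt w (W n) hj).symm) hDw)
  rcases lt_or_ge j (d (n + 1)) with hlt | hge
  · rw [splice_of_lt _ _ hlt, hval n w hw j hj hlt]
  · exact splice_of_le _ _ hge

section Collapse

open Classical in
/-- The substitution of the variable beginning at `sInf V` for all variables beginning in `V`, and
of the letter `β i` for every other variable beginning at some `i` with `s ≤ i < s'`. -/
noncomputable def collapse (s s' : ℕ) (V : Set ℕ) (β : ℕ → ℕ) (i : ℕ) : ℕ :=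
  if i ∈ V then sInf V else freeze (Ico s s')ᶜ β i

/-- The pairs `(V, β)` for which `collapse s s' V β` can be applied to the variable word `h` and
leaves a variable of type `m` with letters `L`. -/
structure IsCollapsible (𝒜 : TypedAlphabet) (h : ℕ → ℕ) (s s' m : ℕ) (L : Finset ℕ) (V : Set ℕ)
    (β : ℕ → ℕ) : Prop where
  nonempty : V.Nonempty
  subset : V ⊆ Ico s s'
  fixed : ∀ i ∈ V, h i = i
  type_eq : ∀ i ∈ V, 𝒜.type i = m
  letters_eq : ∀ i ∈ V, 𝒜.letters i = L
  mem_letters : ∀ i, β i ∈ 𝒜.letters i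

variable {V : Set ℕ} {β : ℕ → ℕ} {L : Finset ℕ} {i : ℕ}

theorem collapse_of_mem (hi : i ∈ V) : collapse s s' V β i = sInf V := if_pos hi

theorem collapse_of_mem_Ico (hi : i ∈ Ico s s') (hV : i ∉ V) : collapse s s' V β i = β i :=
  (if_neg hV).trans (freeze_of_notMem fun h => h hi)

namespace IsCollapsible

section

variable (H : IsCollapsible 𝒜 h s s' m L V β)
include H

theorem sInf_mem : sInf V ∈ V := Nat.sInf_mem H.nonempty

theorem sInf_mem_Ico : sInf V ∈ Ico s s' := H.subset H.sInf_mem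

theorem collapse_of_notMem_Ico (hi : i ∉ Ico s s') : collapse s s' V β i = i :=
  (if_neg fun hV => hi (H.subset hV)).trans (freeze_of_mem hi)

theorem collapse_cases (i : ℕ) : i ∈ V ∧ collapse s s' V β i = sInf V ∨
    collapse s s' V β i = i ∨
    i ∈ Ico s s' ∧ collapse s s' V β i = β i ∧ β i ∈ 𝒜.letters i := by
  by_cases hV : i ∈ V
  · exact .inl ⟨hV, collapse_of_mem hV⟩
  by_cases hi : i ∈ Ico s s'
  · exact .inr (.inr ⟨hi, collapse_of_mem_Ico hi hV, H.mem_letters i⟩)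
  · exact .inr (.inl (H.collapse_of_notMem_Ico hi))

theorem collapse_letter (hs : 𝒜.size ≤ s) {a : ℕ} (ha : a < 𝒜.size) : collapse s s' V β a = a :=
  H.collapse_of_notMem_Ico fun h => by grind

theorem collapse_eq_self_iff (hs : 𝒜.size ≤ s) (hi : i ∈ Ico s s') :
    collapse s s' V β i = i ↔ i = sInf V := by
  refine ⟨fun hc => ?_, fun hc => hc ▸ collapse_of_mem H.sInf_mem⟩
  by_cases hV : i ∈ V
  · rw [← hc, collapse_of_mem hV]
  · have := 𝒜.lt_size (H.mem_letters i)
    rw [collapse_of_mem_Ico hi hV] at hc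
    grind

theorem varWord_collapse (hs : 𝒜.size ≤ s) : VarWord 𝒜 (collapse s s' V β) := by
  have hp := H.sInf_mem_Ico
  have hlt {j a : ℕ} (ha : a ∈ 𝒜.letters j) := 𝒜.lt_size ha
  have hβ {j : ℕ} (hj : j ∈ Ico s s') : β j < j := (hlt (H.mem_letters j)).trans_le (hs.trans hj.1)
  constructor
  all_goals
    intro j
    rcases H.collapse_cases j with ⟨hV, hj⟩ | hj | ⟨hj', hj, ha⟩
    all_goals rw [hj]
  · exact Nat.sInf_le hV
  · exact (hβ hj').le
  · exact collapse_of_mem H.sInf_mem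
  · exact hj
  · exact H.collapse_letter hs (hlt ha)
  · grind
  · exact fun hj => 𝒜.letters_of_lt hj ▸ Finset.mem_singleton_self j
  · exact fun _ => ha
  · exact fun _ => (H.type_eq _ H.sInf_mem).trans (H.type_eq j hV).symm
  · exact fun _ => rfl
  · exact fun hq => absurd (hlt ha) hq.not_gt
  · exact fun _ => (H.letters_eq _ H.sInf_mem).trans (H.letters_eq j hV).symm
  · exact fun _ => rfl
  · exact fun hq => absurd (hlt ha) hq.not_gt
  · intro k _ hk hkj
    have hj' := H.subset hV
    exact mt (H.collapse_eq_self_iff hs ⟨hp.1.trans hk.le, hkj.trans_lt hj'.2⟩).1 hk.ne'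
  · intro k _ hk hkj
    omega
  · exact fun hq => absurd (hlt ha) hq.not_gt

theorem isCut_collapse (hs : 𝒜.size ≤ s) : IsCut 𝒜 (collapse s s' V β) s where
  size_le := hs
  le_of_le {j} hj hq := by
    have := H.sInf_mem_Ico
    rcases H.collapse_cases j with ⟨-, h⟩ | h | ⟨-, h, ha⟩
    · exact h ▸ this.1
    · rwa [h]
    · exact absurd (h ▸ 𝒜.lt_size ha) hq.not_gt

theorem isCut_collapse_right (hs : 𝒜.size ≤ s) : IsCut 𝒜 (collapse s s' V β) s' where
  size_le := hs.trans (H.sInf_mem_Ico.1.trans H.sInf_mem_Ico.2.le)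
  le_of_le {j} hj _ := by rwa [H.collapse_of_notMem_Ico fun h => h.2.not_ge hj]

end

variable (H : IsCollapsible 𝒜 h s s' m L V β) (he : Extends 𝒜 s' h h') (hs : IsCut 𝒜 h s)
include H he hs

theorem extends_collapse : Extends 𝒜 s h (collapse s s' V β ∘ h') := by
  have hp := H.sInf_mem_Ico
  have he' : Extends 𝒜 s h h' := he.mono hs (hp.1.trans hp.2.le)
  refine he'.trans (.comp he.word he'.cut (H.varWord_collapse hs.size_le)
    (H.isCut_collapse hs.size_le) (fun j hj => H.collapse_of_notMem_Ico (by grind)) (fun j => ?_)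
    fun m => ?_)
  · rcases H.collapse_cases (h' j) with ⟨-, hj⟩ | hj | ⟨-, hj, ha⟩
    · rw [hj, he.head hp.2, H.fixed _ H.sInf_mem]
    · rw [hj, he.word.idem]
    · rw [hj, he.word.letter (𝒜.lt_size ha)]
  · refine ((he.word.frequently m).and_eventually (eventually_ge_atTop s')).mono fun j hj => ?_
    exact ⟨H.collapse_of_notMem_Ico fun h => by grind, hj.1⟩

theorem collapse_comp_eq_self_iff (hh : VarWord 𝒜 h) (hi : i ∈ Ico s s') :
    (collapse s s' V β ∘ h') i = i ↔ i = sInf V := by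
  rw [← H.collapse_eq_self_iff hs.size_le hi]
  refine ⟨fun hc => ?_, fun hc => ?_⟩
  · have hfix : h' i = i := he.head hi.2 ▸ (H.extends_collapse he hs).fixed hh hc
    rwa [Function.comp_apply, hfix] at hc
  · have hV : i ∈ V := ((H.collapse_eq_self_iff hs.size_le hi).1 hc) ▸ H.sInf_mem
    rw [Function.comp_apply, he.head hi.2, H.fixed i hV, hc]

/-- The value that `u` takes at the collapsed variable decides which `w'` to use. -/
theorem forallHead_collapse {d : ℕ} (hh : VarWord 𝒜 h)
    (hw : ∀ a ∈ L, ∃ w', IsInstance 𝒜 h w' ∧ EqOn w' w (Ici s') ∧ ForallHead 𝒜 D h s d w' ∧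
      (∀ i ∈ V, w' i = a) ∧ ∀ i < s', h i = i → i ∉ V → w' i = β i) :
    ForallHead 𝒜 D (collapse s s' V β ∘ h') s' d w := by
  intro u hu
  have hp := H.sInf_mem_Ico
  have hss : s ≤ s' := hp.1.trans hp.2.le
  have hc : ∀ j < s', u (collapse s s' V β (h j)) = u j := fun j hj => by
    rw [← hu.coarser j hj, Function.comp_apply, he.head hj]
  have hua {a : ℕ} (ha : a < 𝒜.size) : u a = a := by
    have := hu.mem a (ha.trans_le (hs.size_le.trans hss))
    rwa [𝒜.letters_of_lt ha, Finset.mem_singleton] at this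
  obtain ⟨w', hw', hww, hD, hV, hβ⟩ := hw (u (sInf V)) <| by
    rw [← H.letters_eq _ H.sInf_mem]
    exact hu.mem _ hp.2
  have huh : IsHeadInstance 𝒜 h s u := by
    refine ⟨fun j hj => hu.mem j (hj.trans_le hss), fun j hj => ?_⟩
    have := (hh.le j).trans_lt hj
    rw [← hc j (hj.trans_le hss), H.collapse_of_notMem_Ico (by grind)]
  convert hD u huh using 1
  funext j
  rcases lt_or_ge j s with hj | hj
  · rw [splice_of_lt u w (hj.trans_le hss), splice_of_lt u w' hj]
  rw [splice_of_le u w' hj]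
  rcases lt_or_ge j s' with hj' | hj'
  · rw [splice_of_lt u w hj', ← hc j hj']
    have hlt := (hh.le j).trans_lt hj'
    rcases lt_or_ge (h j) 𝒜.size with hq | hq
    · rw [hw'.eq_of_lt_size hq, H.collapse_letter hs.size_le hq, hua hq]
    rw [← hw'.coarser]
    by_cases hjV : h j ∈ V
    · rw [collapse_of_mem hjV, hV _ hjV]
    · rw [collapse_of_mem_Ico ⟨hs.le_of_le hj hq, hlt⟩ hjV, hua (𝒜.lt_size (H.mem_letters _)),
        hβ _ hlt (hh.idem j) hjV]
  · rw [splice_of_le u w hj', hww hj']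

end IsCollapsible
end Collapse

theorem InfVarWord.exists_infinite_letters_eq (hh : InfVarWord 𝒜 h) (m : ℕ) :
    ∃ L : Finset ℕ, {j | (h j = j ∧ 𝒜.type j = m) ∧ 𝒜.letters j = L}.Infinite := by
  have hinf := (Nat.frequently_atTop_iff_infinite.1 (hh.frequently m)).to_subtype
  have hmem (j : ℕ) : 𝒜.letters j ∈ (Finset.range 𝒜.size).powerset :=
    Finset.mem_powerset.2 fun a ha => Finset.mem_range.2 (𝒜.lt_size ha)
  obtain ⟨L, hL⟩ := Finite.exists_infinite_fiber
    fun j : {j | h j = j ∧ 𝒜.type j = m} => (⟨𝒜.letters j, hmem j⟩ : (Finset.range _).powerset)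
  refine ⟨L, ((Set.infinite_coe_iff.1 hL).image Subtype.val_injective.injOn).mono ?_⟩
  rintro _ ⟨j, hj, rfl⟩
  exact ⟨j.2, congrArg Subtype.val hj⟩

theorem exists_injective_of_infinite {S : Set ℕ} (hS : S.Infinite) (k : ℕ) (ι : Type*) [Finite ι] :
    ∃ φ : ι → ℕ, φ.Injective ∧ ∀ x, φ x ∈ S ∧ k ≤ φ x := by
  obtain ⟨e, he⟩ := exists_injective_nat ι
  have hmono := Nat.nth_strictMono hS
  refine ⟨fun x => Nat.nth (· ∈ S) (k + e x), fun x y hxy => ?_,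
    fun x => ⟨Nat.nth_mem_of_infinite hS _, ?_⟩⟩
  · exact he (Nat.add_left_cancel (hmono.injective hxy))
  exact le_trans (Nat.le_add_right k _) hmono.le_apply

instance {α ι : Type*} [Finite α] [Finite ι] : Finite (Combinatorics.Line α ι) :=
  .of_injective Combinatorics.Line.idxFun fun _ _ h => Combinatorics.Line.ext h

theorem extend_mem {t : ℕ → Finset ℕ} {ι : Type*} {φ : ι → ℕ} (hφ : φ.Injective) {v : ι → ℕ}
    (hv : ∀ x, v x ∈ t (φ x)) {w₀ : ℕ → ℕ} (hw₀ : ∀ i, w₀ i ∈ t i) (i : ℕ) :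
    Function.extend φ v w₀ i ∈ t i := by
  by_cases hi : ∃ x, φ x = i
  · obtain ⟨x, rfl⟩ := hi
    exact (hφ.extend_apply v w₀ x).symm ▸ hv x
  · exact (Function.extend_apply' v w₀ i hi).symm ▸ hw₀ i

/-- The Hales–Jewett theorem for words over `L` written on points of `S`, where the word written as
`α` is coloured by the part of `Φ α` below `k`. -/
theorem exists_finset_lines {t : ℕ → Finset ℕ} (ht : ∀ i, (t i).Nonempty) {S : Set ℕ}
    (hS : S.Infinite) {L : Finset ℕ} (hL : ∀ i ∈ S, t i = L) (k : ℕ) :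
    ∃ (N : ℕ) (C : Finset (Set ℕ × (ℕ → ℕ))),
      (∀ c ∈ C, c.1.Nonempty ∧ c.1 ⊆ S ∩ Ico k N ∧ ∀ i, c.2 i ∈ t i) ∧
      ∀ Φ : (ℕ → ℕ) → ℕ → ℕ, (∀ α, (∀ i, α i ∈ t i) → ∀ i, Φ α i ∈ t i) →
        ∃ c ∈ C, ∀ a ∈ L, ∃ α : ℕ → ℕ, (∀ i, α i ∈ t i) ∧ (∀ i < k, Φ α i = c.2 i) ∧
          (∀ i ∈ c.1, α i = a) ∧ ∀ i ≥ k, i ∉ c.1 → α i = c.2 i := by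
  obtain ⟨ι, _, hι⟩ := Combinatorics.Line.exists_mono_in_high_dimension L ((i : Fin k) → t i)
  obtain ⟨φ, hφinj, hφ⟩ := exists_injective_of_infinite hS k ι
  obtain ⟨N, hN⟩ : ∃ N, ∀ x, φ x < N :=
    (eventually_all.2 fun x => eventually_gt_atTop (φ x)).exists (f := atTop)
  obtain ⟨a₀, ha₀⟩ : L.Nonempty := by
    obtain ⟨i, hi⟩ := hS.nonempty
    exact hL i hi ▸ ht i
  choose w₀ hw₀ using ht
  let fill (v : ι → L) : ℕ → ℕ := Function.extend φ (fun x => v x) w₀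
  have hfillφ (v x) : fill v (φ x) = v x := hφinj.extend_apply _ _ x
  have hfill (v) : ∀ i, fill v i ∈ t i :=
    extend_mem hφinj (fun x => (hL _ (hφ x).1).symm ▸ (v x).2) hw₀
  let V (l : Combinatorics.Line L ι) : Set ℕ := φ '' {x | l.idxFun x = none}
  let β (l : Combinatorics.Line L ι) (c : (i : Fin k) → t i) (i : ℕ) : ℕ :=
    if hi : i < k then c ⟨i, hi⟩ else fill (l ⟨a₀, ha₀⟩) i
  have hβlt (l c) {i : ℕ} (hi : i < k) : β l c i = c ⟨i, hi⟩ := dif_pos hi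
  have hβge (l c) {i : ℕ} (hi : k ≤ i) : β l c i = fill (l ⟨a₀, ha₀⟩) i := dif_neg hi.not_gt
  have hfin := Set.finite_range fun lc : _ × _ => (V lc.1, β lc.1 lc.2)
  refine ⟨N, hfin.toFinset, fun c hc => ?_, fun Φ hΦ => ?_⟩
  · obtain ⟨⟨l, c⟩, rfl⟩ := hfin.mem_toFinset.1 hc
    refine ⟨Set.image_nonempty.2 l.proper, ?_, fun i => show β l c i ∈ t i from ?_⟩
    · rintro _ ⟨x, -, rfl⟩
      exact ⟨(hφ x).1, (hφ x).2, hN x⟩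
    · rcases lt_or_ge i k with hi | hi
      · exact (hβlt l c hi).symm ▸ (c _).2
      · exact (hβge l c hi).symm ▸ hfill _ i
  · obtain ⟨l, c, hc⟩ := hι fun v i => ⟨Φ (fill v) i, hΦ _ (hfill v) i⟩
    refine ⟨(V l, β l c), hfin.mem_toFinset.2 ⟨(l, c), rfl⟩, fun a ha =>
      ⟨_, hfill (l ⟨a, ha⟩), ?_, ?_, ?_⟩⟩
    · intro i hi
      exact (congrArg Subtype.val (congrFun (hc ⟨a, ha⟩) ⟨i, hi⟩)).trans (hβlt l c hi).symm
    · rintro _ ⟨x, hx, rfl⟩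
      rw [hfillφ, l.apply_none _ _ hx]
    · intro i hi hV
      refine Eq.trans ?_ (hβge l c hi).symm
      by_cases hφi : ∃ x, φ x = i
      · obtain ⟨x, rfl⟩ := hφi
        obtain ⟨b, hb⟩ := Option.ne_none_iff_exists'.1 fun hx => hV ⟨x, hx, rfl⟩
        rw [hfillφ, hfillφ, l.apply_some hb, l.apply_some hb]
      · simp only [fill, Function.extend_apply' _ w₀ i hφi]

theorem exists_collapsible (hh : InfVarWord 𝒜 h) (hs : 𝒜.size ≤ s) (hk : s ≤ k) (m : ℕ)
    (hback : ∀ w, IsInstance 𝒜 h w → ∀ d ≥ k, h d = d → 𝒜.type d = τ →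
      ∃ w', IsInstance 𝒜 h w' ∧ EqOn w' w (Ici k) ∧ D d w') :
    ∃ s' ≥ s, h s' = s' ∧ ∃ (L : Finset ℕ) (C : Finset (Set ℕ × (ℕ → ℕ))),
      (∀ c ∈ C, IsCollapsible 𝒜 h s s' m L c.1 c.2) ∧
      ∀ w, IsInstance 𝒜 h w → ∀ d ≥ s', h d = d → 𝒜.type d = τ → ∃ c ∈ C, ∀ a ∈ L,
        ∃ w', IsInstance 𝒜 h w' ∧ EqOn w' w (Ici s') ∧ D d w' ∧
          (∀ i ∈ c.1, w' i = a) ∧ ∀ i < s', h i = i → i ∉ c.1 → w' i = c.2 i := by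
  obtain ⟨L, hL⟩ := hh.exists_infinite_letters_eq m
  obtain ⟨N, C, hC, hΦ⟩ := exists_finset_lines 𝒜.letters_nonempty hL (fun i hi => hi.2) k
  obtain ⟨s', hs', hs'h, -⟩ := frequently_atTop.1 (hh.frequently 0) (max k N)
  have hks' : k ≤ s' := (le_max_left k N).trans hs'
  have hNs' : N ≤ s' := (le_max_right k N).trans hs'
  refine ⟨s', hk.trans hks', hs'h, L, C, fun c hc => ?_, fun w hw d hd hfix hτ => ?_⟩
  · obtain ⟨hne, hsub, hβ⟩ := hC c hc
    exact ⟨hne, fun i hi => ⟨hk.trans (hsub hi).2.1, (hsub hi).2.2.trans_le hNs'⟩,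
      fun i hi => (hsub hi).1.1.1, fun i hi => (hsub hi).1.1.2, fun i hi => (hsub hi).1.2, hβ⟩
  have hw₁ {α : ℕ → ℕ} (hα : ∀ i, α i ∈ 𝒜.letters i) :
      IsInstance 𝒜 h (splice s' (α ∘ h) w) :=
    isInstance_splice hw ((hh.isInstance_comp hα).isHeadInstance s') hh.toVarWord
      (hh.isCut hs'h (by omega)) (eqOn_refl _ _)
  choose! Φ hΦinst hΦeq hΦD using fun (α : ℕ → ℕ) (hα : ∀ i, α i ∈ 𝒜.letters i) =>
    hback _ (hw₁ hα) d (hks'.trans hd) hfix hτ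
  obtain ⟨c, hc, hcL⟩ := hΦ Φ fun α hα => (hΦinst α hα).mem
  refine ⟨c, hc, fun a ha => ?_⟩
  obtain ⟨α, hα, hlt, hV, hge⟩ := hcL a ha
  have hΦα {i : ℕ} (hi : h i = i) (hki : k ≤ i) (his : i < s') : Φ α i = α i := by
    rw [hΦeq α hα hki, splice_of_lt _ w his, Function.comp_apply, hi]
  refine ⟨Φ α, hΦinst α hα, fun i hi => ?_, hΦD α hα, fun i hi => ?_, fun i hi hfix hiV => ?_⟩
  · rw [hΦeq α hα (hks'.trans hi), splice_of_le _ w hi]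
  · obtain ⟨⟨⟨hfix, -⟩, -⟩, hki, hiN⟩ := (hC c hc).2.1 hi
    rw [hΦα hfix hki (hiN.trans_le hNs'), hV i hi]
  · rcases lt_or_ge i k with hik | hki
    · exact hlt i hik
    · rw [hΦα hfix hki hi, hge i hki hiV]

/-- A step of the fusion in the Carlson–Simpson theorem: the word `h` cut at `s` is coarsened to a
word `h'` cut at `s'`, with exactly one variable, of type `m`, beginning between the two cuts, at
`p`. -/
structure Step (𝒜 : TypedAlphabet) (m s : ℕ) (h : ℕ → ℕ) (p s' : ℕ) (h' : ℕ → ℕ) : Prop where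
  ext : Extends 𝒜 s h h'
  cut : IsCut 𝒜 h' s'
  mem : p ∈ Ico s s'
  type_eq : 𝒜.type p = m
  fixed_iff : ∀ j ∈ Ico s s', h' j = j ↔ j = p

theorem Large.exists_step (H : Large 𝒜 τ (ForallHead 𝒜 D h s) s h) (hh : InfVarWord 𝒜 h)
    (hs : IsCut 𝒜 h s) (hD : IsLocal D) (m : ℕ) :
    ∃ p s' h', Step 𝒜 m s h p s' h' ∧ Large 𝒜 τ (ForallHead 𝒜 D h' s') s' h' := by
  obtain ⟨k, hsk, -, hback⟩ := H.exists_back hh hs (hD.forallHead h s)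
  obtain ⟨s', hss', hs'h, L, C, hC, hCw⟩ := exists_collapsible hh hs.size_le hsk m hback
  have hcut := hh.isCut hs'h (hs.size_le.trans hss')
  obtain ⟨c, hc, h₂, he, hl⟩ := exists_large_of_finset (τ := τ) _ C hh hcut fun h₁ he => by
    obtain ⟨d, hd, hfix, hτ⟩ := frequently_atTop.1 (he.word.frequently τ) s'
    obtain ⟨w, hw⟩ := he.word.exists_instance
    exact ⟨d, hd, hfix, hτ, w, hw, hCw w (hw.of_coarser he.coarser) d hd
      (he.fixed hh.toVarWord hfix) hτ⟩
  have hcol := hC c hc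
  refine ⟨sInf c.1, s', _, ⟨hcol.extends_collapse he hs, ?_, hcol.sInf_mem_Ico,
    hcol.type_eq _ hcol.sInf_mem, fun j => hcol.collapse_comp_eq_self_iff he hs hh.toVarWord⟩,
    (hl.mono fun d w hw => ?_).comp he.word.toVarWord he.cut (hcol.varWord_collapse hs.size_le) ?_⟩
  · exact (hcol.isCut_collapse_right hs.size_le).comp he.cut (hcol.varWord_collapse hs.size_le).le
  · exact hcol.forallHead_collapse he hs hh.toVarWord hw
  · exact fun j hj => hcol.collapse_of_notMem_Ico fun h => h.2.not_ge hj

theorem VarWord.of_eqOn {A : ℕ → ℕ} (H : ∀ j, ∃ h, VarWord 𝒜 h ∧ EqOn A h (Iic j)) :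
    VarWord 𝒜 A := by
  constructor
  all_goals
    intro j
    obtain ⟨h, hh, heq⟩ := H j
    have hj : A j = h j := heq self_mem_Iic
    rw [hj]
  · exact hh.le j
  · rw [heq (hh.le j), hh.idem]
  · exact hh.letter_mem
  · exact hh.type_eq
  · exact hh.letters_eq
  · intro k hq hk hkj
    rw [heq hkj]
    exact hh.block hq hk hkj

theorem exists_extends_limit {s p : ℕ → ℕ} {h : ℕ → ℕ → ℕ} (hs : IsCut 𝒜 (h 0) (s 0))
    (hstep : ∀ n, Step 𝒜 n.unpair.1 (s n) (h n) (p n) (s (n + 1)) (h (n + 1))) :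
    ∃ A, ∀ n, Extends 𝒜 (s n) (h n) A := by
  have hmono : StrictMono s :=
    strictMono_nat_of_lt_succ fun n => (hstep n).mem.1.trans_lt (hstep n).mem.2
  obtain ⟨A, hA⟩ := exists_eqOn_limit hmono fun n => (hstep n).ext.head
  have hext (n m : ℕ) (hnm : n + 1 ≤ m) : Extends 𝒜 (s n) (h n) (h m) := by
    induction m, hnm using Nat.le_induction with
    | base => exact (hstep n).ext
    | succ m hnm ih => exact ih.trans ((hstep m).ext.mono ih.cut (hmono.monotone (by omega)))
  have heq (n j : ℕ) : ∃ m, n + 1 ≤ m ∧ EqOn A (h m) (Iic j) := by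
    refine ⟨n + j + 1, by omega, (hA _).mono fun i hi => ?_⟩
    have := hmono.le_apply (x := n + j + 1)
    grind
  have hAword : VarWord 𝒜 A := .of_eqOn fun j => by
    obtain ⟨m, hm, hAm⟩ := heq 0 j
    exact ⟨h m, (hext 0 m hm).word.toVarWord, hAm⟩
  have hfreq (m : ℕ) : ∃ᶠ j in atTop, A j = j ∧ 𝒜.type j = m := by
    refine frequently_atTop.2 fun N => ⟨p (Nat.pair m N), ?_, ?_, ?_⟩
    · exact (Nat.right_le_pair m N).trans (hmono.le_apply.trans (hstep _).mem.1)
    · rw [hA _ (hstep _).mem.2, ((hstep _).fixed_iff _ (hstep _).mem).2 rfl]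
    · rw [(hstep _).type_eq, Nat.unpair_pair]
  refine ⟨A, fun n => ⟨⟨hAword, hfreq⟩, fun j => ?_, hA n, ?_, fun {j} hj hq => ?_⟩⟩
  · obtain ⟨m, hm, hAm⟩ := heq n (max j (h n j))
    have he := hext n m hm
    rw [hAm (mem_Iic.2 (le_max_left _ _)), hAm (mem_Iic.2 (le_max_right _ _)), he.coarser]
  · exact hs.size_le.trans (hmono.monotone n.zero_le)
  · obtain ⟨m, hm, hAm⟩ := heq n j
    rw [hAm self_mem_Iic] at hq ⊢
    exact (hext n m hm).cut.le_of_le hj hq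

theorem exists_limit {Q : ℕ → (ℕ → ℕ) → Prop} {R : ℕ → (ℕ → ℕ) → Prop} (hh : InfVarWord 𝒜 h)
    (hs : IsCut 𝒜 h s) (hQ : Q s h)
    (hstep : ∀ m s h, InfVarWord 𝒜 h → IsCut 𝒜 h s → Q s h →
      ∃ p s' h', Step 𝒜 m s h p s' h' ∧ Q s' h' ∧ R p h') :
    ∃ A, Extends 𝒜 s h A ∧ ∀ j ≥ s, A j = j → ∃ s₁ h₁ s' h',
      Step 𝒜 (𝒜.type j) s₁ h₁ j s' h' ∧ Extends 𝒜 s h h' ∧ Extends 𝒜 s' h' A ∧ Q s' h' ∧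
        R j h' := by
  obtain ⟨f, hf0, hf⟩ := exists_seq (a := (s, h))
    (p := fun x => InfVarWord 𝒜 x.2 ∧ IsCut 𝒜 x.2 x.1 ∧ Extends 𝒜 s h x.2 ∧ s ≤ x.1 ∧ Q x.1 x.2)
    (r := fun n x y => ∃ p, Step 𝒜 n.unpair.1 x.1 x.2 p y.1 y.2 ∧ R p y.2)
    ⟨hh, hs, .refl hh hs, le_rfl, hQ⟩ fun n ⟨s₁, h₁⟩ ⟨hh₁, hs₁, he₁, hle₁, hQ₁⟩ => by
      obtain ⟨p, s', h', hst, hQ', hR⟩ := hstep n.unpair.1 s₁ h₁ hh₁ hs₁ hQ₁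
      exact ⟨(s', h'), ⟨hst.ext.word, hst.cut, he₁.trans (hst.ext.mono he₁.cut hle₁),
        hle₁.trans (hst.mem.1.trans hst.mem.2.le), hQ'⟩, p, hst, hR⟩
  choose hf p hst hR using hf
  obtain ⟨A, hA⟩ := exists_extends_limit (s := fun n => (f n).1) (hf 0).2.1 hst
  have hA0 := hA 0
  simp only [hf0] at hA0
  refine ⟨A, hA0, fun j hj hfix => ?_⟩
  obtain ⟨n, hn, hn'⟩ := exists_block (s := fun n => (f n).1) (i := j)
    (strictMono_nat_of_lt_succ fun n => (hst n).mem.1.trans_lt (hst n).mem.2) (by simpa only [hf0])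
  obtain rfl := ((hst n).fixed_iff j ⟨hn, hn'⟩).1 (((hA (n + 1)).head hn').symm.trans hfix)
  exact ⟨_, _, _, _, (hst n).type_eq.symm ▸ hst n, (hf (n + 1)).2.2.1, hA (n + 1),
    (hf (n + 1)).2.2.2.2, hR n⟩

theorem forall_of_freeze {d : ℕ} {Z : Set ℕ} (hZ : Disjoint Z (Ico s d))
    (he : Extends 𝒜 s h h') (hw : IsInstance 𝒜 h' w) (hD : IsLocal D)
    (hDw : ForallHead 𝒜 D h s d w) (hu : IsInstance 𝒜 (freeze Z w ∘ h') u) : D d u := by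
  have huh' : IsInstance 𝒜 h' u :=
    ⟨hu.mem, hu.coarser.trans fun j => congrArg (freeze Z w) (he.word.idem j)⟩
  refine hD (fun j hj => ?_) (hDw u ((huh'.of_coarser he.coarser).isHeadInstance s))
  rcases lt_or_ge j s with hjs | hjs
  · exact splice_of_lt u w hjs
  rw [splice_of_le u w hjs]
  rcases lt_or_ge (h' j) 𝒜.size with hq | hq
  · rw [hw.eq_of_lt_size hq, huh'.eq_of_lt_size hq]
  · have hmem : h' j ∈ Ico s d := ⟨he.cut.le_of_le hjs hq, (he.word.le j).trans_lt hj⟩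
    rw [hu.eq_of_notMem_freeze hw.mem (hZ.notMem_of_mem_right hmem), hw.coarser]

/-- Take the limit of a sequence of steps, apply largeness to it, and freeze the variables before
the position found to the corresponding instance. -/
theorem Large.exists_step_forall (H : Large 𝒜 τ (ForallHead 𝒜 D h s) s h) (hh : InfVarWord 𝒜 h)
    (hs : IsCut 𝒜 h s) (hD : IsLocal D) :
    ∃ p s' h', Step 𝒜 τ s h p s' h' ∧ Large 𝒜 τ (ForallHead 𝒜 D h' s') s' h' ∧
      ∀ v, IsInstance 𝒜 h' v → D p v := by
  obtain ⟨A, hA, hAstep⟩ := exists_limit (Q := fun s h => Large 𝒜 τ (ForallHead 𝒜 D h s) s h)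
    (R := fun _ _ => True) hh hs H
    fun m s h hh hs H => by simpa using H.exists_step hh hs hD m
  obtain ⟨d, hsd, hfix, rfl, w, hw, hDw⟩ := H A hA
  obtain ⟨s₁, h₁, s', h', hst, he, hA', hl, -⟩ := hAstep d hsd hfix
  have hwh' := hw.of_coarser hA'.coarser
  have hds' : d < s' := hst.mem.2
  let Z : Set ℕ := (Ico s d)ᶜ
  have hsub {i : ℕ} (hi : i ∉ Ico s d) : i ∈ Z := hi
  have he' : Extends 𝒜 s h' (freeze Z w ∘ h') :=
    extends_freeze hwh'.mem he.word he.cut (fun i hi => hsub fun h => h.1.not_gt hi) fun m =>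
      ((he.word.frequently m).and_eventually (eventually_ge_atTop d)).mono fun j hj =>
        ⟨hsub fun h => h.2.not_ge hj.2, hj.1⟩
  have hρ : VarWord 𝒜 (freeze Z w) := varWord_freeze hwh'.mem
  have hid : EqOn (freeze Z w) id (Ici s') := fun i hi =>
    freeze_of_mem (hsub fun h => h.2.not_ge (hds'.le.trans hi))
  refine ⟨d, s', _, ⟨he.trans he', ?_, ⟨hsd, hds'⟩, rfl, fun j hj => ⟨fun hj' => ?_, ?_⟩⟩,
    (hl.mono fun e v hv => hv.of_coarser (h' := freeze Z w ∘ h') he.word.toVarWord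
      he'.coarser).comp he.word.toVarWord hst.cut hρ hid,
    fun v => forall_of_freeze disjoint_compl_left he hwh' hD hDw⟩
  · exact IsCut.comp ⟨hst.cut.size_le, fun hj _ => by rwa [hid hj]⟩ hst.cut hρ.le
  · have hj₁ : h' j = j := he'.fixed he.word.toVarWord hj'
    refine (hst.fixed_iff j ⟨?_, hj.2⟩).1 hj₁
    by_contra! hlt
    have hjd : j ∈ Ico s d := ⟨hj.1, hlt.trans_le hst.mem.1⟩
    have := 𝒜.lt_size (hwh'.mem j)
    rw [Function.comp_apply, hj₁, freeze_of_notMem fun h : j ∈ Z => h hjd] at hj'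
    have := hs.size_le
    grind
  · rintro rfl
    rw [Function.comp_apply, (hst.fixed_iff j hst.mem).2 rfl,
      freeze_of_mem (hsub fun h => h.2.false)]

theorem Large.exists_forall (H : Large 𝒜 τ (ForallHead 𝒜 D h s) s h) (hh : InfVarWord 𝒜 h)
    (hs : IsCut 𝒜 h s) (hD : IsLocal D) :
    ∃ A, Extends 𝒜 s h A ∧
      ∀ d ≥ s, A d = d → 𝒜.type d = τ → ∀ w, IsInstance 𝒜 A w → D d w := by
  obtain ⟨A, hA, hAstep⟩ := exists_limit
    (Q := fun s h => Large 𝒜 τ (ForallHead 𝒜 D h s) s h)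
    (R := fun p h' => 𝒜.type p = τ → ∀ v, IsInstance 𝒜 h' v → D p v) hh hs H
    fun m s h hh hs H => by
      by_cases hm : m = τ
      · obtain ⟨p, s', h', hst, hl, hv⟩ := H.exists_step_forall hh hs hD
        exact ⟨p, s', h', hm ▸ hst, hl, fun _ => hv⟩
      · obtain ⟨p, s', h', hst, hl⟩ := H.exists_step hh hs hD m
        exact ⟨p, s', h', hst, hl, fun hτ => absurd (hst.type_eq.symm.trans hτ) hm⟩
  refine ⟨A, hA, fun d hd hfix hτ w hw => ?_⟩
  obtain ⟨s₁, h₁, s', h', -, -, hA', -, hR⟩ := hAstep d hd hfix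
  exact hR hτ w (hw.of_coarser hA'.coarser)

theorem infVarWord_id : InfVarWord 𝒜 id where
  le _ := le_rfl
  idem _ := rfl
  letter_mem hj := 𝒜.letters_of_lt hj ▸ Finset.mem_singleton_self _
  type_eq _ := rfl
  letters_eq _ := rfl
  block _ hlt hle := absurd hle hlt.not_ge
  frequently m := by simpa using 𝒜.frequently_type m

theorem carlson_simpson (𝒜 : TypedAlphabet) (hD : IsLocal D) (τ : ℕ) :
    ∃ A, InfVarWord 𝒜 A ∧
      ((∀ d ≥ 𝒜.size, A d = d → 𝒜.type d = τ → ∀ w, IsInstance 𝒜 A w → D d w) ∨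
        ∀ d ≥ 𝒜.size, A d = d → 𝒜.type d = τ → ∀ w, IsInstance 𝒜 A w → ¬ D d w) := by
  have hcut : IsCut 𝒜 id 𝒜.size := ⟨le_rfl, fun h _ => h⟩
  by_cases hl : Large 𝒜 τ (ForallHead 𝒜 D id 𝒜.size) 𝒜.size id
  · obtain ⟨A, hA, hAD⟩ := hl.exists_forall infVarWord_id hcut hD
    exact ⟨A, hA.word, .inl hAD⟩
  simp only [Large, not_forall] at hl
  obtain ⟨A, hA, hfail⟩ := hl
  refine ⟨A, hA.word, .inr fun d hd hfix hτ w hw hDw => hfail ⟨d, hd, hfix, hτ, w, hw, ?_⟩⟩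
  intro u hu
  convert hDw using 1
  funext j
  rcases lt_or_ge j 𝒜.size with hj | hj
  · have := hu.mem j hj
    rw [𝒜.letters_of_lt hj, Finset.mem_singleton] at this
    rw [splice_of_lt u w hj, this, hw.letter hj]
  · exact splice_of_le u w hj

end CarlsonSimpson

/-! ### Alternating equivalence relations -/

theorem nth_eq_nth_of_forall_lt {p q : ℕ → Prop} {k : ℕ} (hp : {x | p x}.Infinite)
    (h : ∀ x < Nat.nth p k, p x ↔ q x) (hq : q (Nat.nth p k)) : Nat.nth q k = Nat.nth p k := by
  classical
  have hcount : Nat.count q (Nat.nth p k) = k := by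
    refine Eq.trans ?_ (Nat.count_nth_of_infinite hp k)
    simp only [Nat.count_eq_card_filter_range]
    exact congrArg _ (Finset.filter_congr fun x hx => (h x (Finset.mem_range.1 hx)).symm)
  rw [← hcount, Nat.nth_count hq, hcount]

theorem apply_eq_of_strictMono {δ : ℕ → ℕ} (hδ : StrictMono δ) {n k : ℕ} (hn : δ n = n)
    (hk : k ≤ n) : δ k = k := by
  have hadd := hδ.add_le_nat (n - k) k
  rw [Nat.sub_add_cancel hk, hn] at hadd
  have hle : k ≤ δ k := hδ.le_apply
  omega

theorem exists_strictMono_of_frequently {S : Set ℕ} {t τ : ℕ → ℕ} {a : ℕ}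
    (hS : ∀ m, ∃ᶠ k in atTop, k ∈ S ∧ t k = m) (ha : a ∈ S) (hta : t a = τ 0) :
    ∃ c : ℕ → ℕ, StrictMono c ∧ c 0 = a ∧ ∀ i, c i ∈ S ∧ t (c i) = τ i := by
  choose next hlt hmem hnext using fun m N => frequently_atTop'.1 (hS m) N
  let c : ℕ → ℕ := fun i => Nat.rec a (fun i x => next (τ (i + 1)) x) i
  exact ⟨c, strictMono_nat_of_lt_succ fun i => hlt _ _, rfl, fun i =>
    Nat.rec ⟨ha, hta⟩ (fun i _ => ⟨hmem _ _, hnext _ _⟩) i⟩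

theorem strictMono_splice {d : ℕ} {g : ℕ → ℕ} (hg : StrictMono g) (hd : d ≤ g 0) :
    StrictMono (splice d id fun j => g (j - d)) := strictMono_nat_of_lt_succ fun j => by
  rcases lt_trichotomy (j + 1) d with hj | hj | hj
  · simp only [splice_of_lt _ _ hj, splice_of_lt _ _ (j.lt_succ_self.trans hj), id, j.lt_succ_self]
  · rw [splice_of_lt _ _ (j.lt_succ_self.trans_eq hj), splice_of_le _ _ hj.ge, hj, Nat.sub_self]
    exact (j.lt_succ_self.trans_eq hj).trans_le hd
  · rw [splice_of_le _ _ (Nat.lt_succ_iff.1 hj), splice_of_le _ _ hj.le]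
    exact hg (by omega)

theorem splice_freeze_mem {d : ℕ} {Z : Set ℕ} {f m : ℕ → ℕ} (hd : Iio d ⊆ Z) (hf : ∀ x, f x ≤ x)
    (hm : ∀ x, f x ∉ Z → m (f x) ≤ x ∧ m (f x) ∈ Z) (x : ℕ) :
    splice d id (freeze Z m ∘ f) x ≤ x ∧ splice d id (freeze Z m ∘ f) x ∈ Z := by
  rcases lt_or_ge x d with hx | hx
  · rw [splice_of_lt _ _ hx]
    exact ⟨le_rfl, hd hx⟩
  rw [splice_of_le _ _ hx, Function.comp_apply]
  by_cases hfx : f x ∈ Z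
  · rw [freeze_of_mem hfx]
    exact ⟨hf x, hfx⟩
  · rw [freeze_of_notMem hfx]
    exact hm x hfx

/-- A point of the space of alternating equivalence relations, encoded by the retraction of `ℕ` that
sends each point to the least element of its class. The `k`-th minimal representative has type
`σ k`, and `perm x t` says that `x` is permitted to lie in a class of type `t`. -/
structure AltRep (ty σ : ℕ → ℕ) (perm : ℕ → ℕ → Prop) where
  toFun : ℕ → ℕ
  le' : ∀ x, toFun x ≤ x
  idem' : ∀ x, toFun (toFun x) = toFun x
  infinite_fixed' : {x | toFun x = x}.Infinite
  ty_nth' : ∀ k, ty (Nat.nth (fun x => toFun x = x) k) = σ k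
  perm_ty' : ∀ x, perm x (ty (toFun x))

namespace AltRep

section Basic

variable {ty σ : ℕ → ℕ} {perm : ℕ → ℕ → Prop} {A B E F G : AltRep ty σ perm} {d k m n x : ℕ}

instance : FunLike (AltRep ty σ perm) ℕ ℕ where
  coe := toFun
  coe_injective E F h := by cases E; congr

/-- The `k`-th minimal representative. -/
noncomputable def nthMin (E : AltRep ty σ perm) (k : ℕ) : ℕ := Nat.nth (fun x => E x = x) k

protected theorem le (E : AltRep ty σ perm) (x : ℕ) : E x ≤ x := E.le' x

theorem idem (E : AltRep ty σ perm) (x : ℕ) : E (E x) = E x := E.idem' x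

theorem infinite_fixed (E : AltRep ty σ perm) : {x | E x = x}.Infinite := E.infinite_fixed'

theorem ty_nthMin (E : AltRep ty σ perm) (k : ℕ) : ty (E.nthMin k) = σ k := E.ty_nth' k

theorem perm_ty (E : AltRep ty σ perm) (x : ℕ) : perm x (ty (E x)) := E.perm_ty' x

@[simp] theorem map_nthMin (E : AltRep ty σ perm) (k : ℕ) : E (E.nthMin k) = E.nthMin k :=
  Nat.nth_mem_of_infinite E.infinite_fixed k

theorem nthMin_strictMono (E : AltRep ty σ perm) : StrictMono E.nthMin :=
  Nat.nth_strictMono E.infinite_fixed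

theorem le_nthMin (E : AltRep ty σ perm) (k : ℕ) : k ≤ E.nthMin k :=
  E.nthMin_strictMono.le_apply

theorem exists_nthMin_eq (h : E x = x) : ∃ k, E.nthMin k = x := by
  classical
  exact ⟨_, Nat.nth_count (p := fun x => E x = x) h⟩

theorem exists_nthMin_eq_map (E : AltRep ty σ perm) (x : ℕ) : ∃ k, E.nthMin k = E x :=
  exists_nthMin_eq (E.idem x)

theorem perm_of_map_eq (h : E x = E.nthMin k) : perm x (σ k) := by
  simpa only [h, ty_nthMin] using E.perm_ty x

theorem exists_of_enum {f z : ℕ → ℕ} (hle : ∀ x, f x ≤ x) (hz : StrictMono z)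
    (hmem : ∀ x, f x ∈ range z) (hfix : ∀ k, f (z k) = z k) (hty : ∀ k, ty (z k) = σ k)
    (hperm : ∀ x, perm x (ty (f x))) : ∃ E : AltRep ty σ perm, ⇑E = f ∧ E.nthMin = z := by
  have hset : {x | f x = x} = range z :=
    ext fun x => ⟨fun hx => hx ▸ hmem x, by rintro ⟨k, rfl⟩; exact hfix k⟩
  have hinf : {x | f x = x}.Infinite := hset ▸ infinite_range_of_injective hz.injective
  have hnth : Nat.nth (fun x => f x = x) = z := ((Nat.nth_strictMono hinf).range_inj hz).1
    ((Nat.range_nth_of_infinite hinf).trans hset)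
  have hidem (x : ℕ) : f (f x) = f x := by
    obtain ⟨k, hk⟩ := hmem x
    rw [← hk, hfix]
  exact ⟨⟨f, hle, hidem, hinf, fun k => (congrArg ty (congrFun hnth k)).trans (hty k), hperm⟩,
    rfl, hnth⟩

theorem nthMin_eq_of_eqOn (h : EqOn F G (Iio (F.nthMin k))) (hG : G (F.nthMin k) = F.nthMin k) :
    G.nthMin k = F.nthMin k :=
  nth_eq_nth_of_forall_lt F.infinite_fixed (fun x hx => by rw [h hx]) hG

/-- The order of the space: `F ≤ E` if the relation of `F` is coarser than that of `E`. -/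
instance : Preorder (AltRep ty σ perm) where
  le F E := Coarser F E
  le_refl E := E.idem
  le_trans _ _ _ h h' := Coarser.trans h h'

theorem map_map_of_le (h : F ≤ E) (x : ℕ) : F (E x) = F x := h x

theorem map_eq_of_le (h : F ≤ E) (hx : F x = x) : E x = x := Coarser.fixed h F.le E.le hx

theorem exists_strictMono_of_le (h : F ≤ E) :
    ∃ δ : ℕ → ℕ, StrictMono δ ∧ ∀ k, F.nthMin k = E.nthMin (δ k) := by
  choose δ hδ using fun k => exists_nthMin_eq (map_eq_of_le h (F.map_nthMin k))
  exact ⟨δ, fun i j hij => E.nthMin_strictMono.lt_iff_lt.1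
    (by simpa only [hδ] using F.nthMin_strictMono hij), fun k => (hδ k).symm⟩

theorem exists_nthMin_eq_of_le (h : F ≤ E) (k : ℕ) : ∃ d ≥ k, F.nthMin k = E.nthMin d := by
  obtain ⟨δ, hδ, hFE⟩ := exists_strictMono_of_le h
  exact ⟨δ k, hδ.le_apply, hFE k⟩

/-- `F` and `G` have the same `n`-th approximation. -/
def Agree (n : ℕ) (F G : AltRep ty σ perm) : Prop :=
  F.nthMin n = G.nthMin n ∧ EqOn F G (Iio (G.nthMin n))

theorem agree_of_eqOn (h : EqOn F G (Iio (F.nthMin k))) (hG : G (F.nthMin k) = F.nthMin k) :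
    Agree k F G :=
  have hk := nthMin_eq_of_eqOn h hG
  ⟨hk.symm, hk ▸ h⟩

namespace Agree

theorem rfl : Agree n F F := ⟨Eq.refl _, eqOn_refl _ _⟩

theorem symm (h : Agree n F G) : Agree n G F := ⟨h.1.symm, h.1 ▸ h.2.symm⟩

theorem trans (h : Agree n E F) (h' : Agree n F G) : Agree n E G :=
  ⟨h.1.trans h'.1, (h'.1 ▸ h.2).trans h'.2⟩

theorem nthMin_eq (h : Agree n F G) (hk : k ≤ n) : F.nthMin k = G.nthMin k := by
  rcases hk.eq_or_lt with heq | hlt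
  · exact heq ▸ h.1
  have hk : F.nthMin k < G.nthMin n := h.1 ▸ F.nthMin_strictMono hlt
  refine (nthMin_eq_of_eqOn (h.2.mono (Iio_subset_Iio hk.le)) ?_).symm
  rw [← h.2 hk, map_nthMin]

theorem mono (h : Agree n F G) (hk : k ≤ n) : Agree k F G :=
  ⟨h.nthMin_eq hk, h.2.mono (Iio_subset_Iio (G.nthMin_strictMono.monotone hk))⟩

theorem map_eq (h : Agree n F G) (hx : x < n) : F x = G x :=
  h.2 (hx.trans_le (G.le_nthMin n))

end Agree

theorem agree_of_le (h : F ≤ E) (hn : F.nthMin n = E.nthMin n) : Agree n F E := by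
  obtain ⟨δ, hδ, hFE⟩ := exists_strictMono_of_le h
  have hδn : δ n = n := E.nthMin_strictMono.injective ((hFE n).symm.trans hn)
  refine ⟨hn, fun x hx => ?_⟩
  obtain ⟨j, hj⟩ := E.exists_nthMin_eq_map x
  have hjn : j ≤ n := (E.nthMin_strictMono.lt_iff_lt.1 (hj ▸ (E.le x).trans_lt hx)).le
  rw [← map_map_of_le h, ← hj, ← apply_eq_of_strictMono hδ hδn hjn, ← hFE, map_nthMin]

/-- The basic set `[a, A]`, where `a` is the `n`-th approximation of `G`. -/
def basic (n : ℕ) (G A : AltRep ty σ perm) : Set (AltRep ty σ perm) := {F | F ≤ A ∧ Agree n F G}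

/-- The basic neighbourhood `[r_n(A), A]` of `A`. -/
def nbhd (n : ℕ) (A : AltRep ty σ perm) : Set (AltRep ty σ perm) := basic n A A

theorem self_mem_nbhd (n : ℕ) (A : AltRep ty σ perm) : A ∈ nbhd n A := ⟨le_rfl, .rfl⟩

theorem nbhd_subset_nbhd (hA : A ∈ nbhd n B) : nbhd n A ⊆ nbhd n B :=
  fun _ hF => ⟨hF.1.trans hA.1, hF.2.trans hA.2⟩

theorem nbhd_anti (h : k ≤ n) : nbhd n A ⊆ nbhd k A := fun _ hF => ⟨hF.1, hF.2.mono h⟩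

theorem basic_congr (h : Agree n F G) : basic n F A = basic n G A :=
  ext fun _ => and_congr_right fun _ => ⟨fun hF => hF.trans h, fun hF => hF.trans h.symm⟩

theorem basic_mono (h : A ≤ B) : basic n G A ⊆ basic n G B := fun _ hF => ⟨hF.1.trans h, hF.2⟩

theorem mem_nbhd_iff : F ∈ nbhd n A ↔ F ≤ A ∧ F.nthMin n = A.nthMin n :=
  ⟨fun hF => ⟨hF.1, hF.2.1⟩, fun hF => ⟨hF.1, agree_of_le hF.1 hF.2⟩⟩

section Limit

variable {f : ℕ → AltRep ty σ perm} {s : ℕ → ℕ}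

theorem mem_nbhd_of_le (hs : Monotone s) (hf : ∀ i, f (i + 1) ∈ nbhd (s i) (f i)) {i j : ℕ}
    (hij : i ≤ j) : f j ∈ nbhd (s i) (f i) := by
  induction j, hij using Nat.le_induction with
  | base => exact self_mem_nbhd _ _
  | succ j hij ih => exact nbhd_subset_nbhd ih (nbhd_anti (hs hij) (hf j))

theorem exists_limit (hs : StrictMono s) (hf : ∀ i, f (i + 1) ∈ nbhd (s i) (f i)) :
    ∃ L, ∀ i, L ∈ nbhd (s i) (f i) := by
  have hmem {i j : ℕ} (hij : i ≤ j) : f j ∈ nbhd (s i) (f i) := mem_nbhd_of_le hs.monotone hf hij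
  have hmap {x i : ℕ} (hi : x < i) : f (x + 1) x = f i x :=
    ((hmem hi).2.map_eq (hs.le_apply (x := x + 1))).symm
  have hnth {i j : ℕ} (hij : i ≤ j) : (f j).nthMin i = (f i).nthMin i :=
    (hmem hij).2.nthMin_eq hs.le_apply
  obtain ⟨L, hL, hLz⟩ := exists_of_enum (ty := ty) (σ := σ) (perm := perm)
    (f := fun x => f (x + 1) x) (z := fun i => (f i).nthMin i) (fun x => (f (x + 1)).le x)
    (strictMono_nat_of_lt_succ fun i => by
      simpa only [hnth i.le_succ] using (f (i + 1)).nthMin_strictMono i.lt_succ_self)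
    (fun x => by
      obtain ⟨k, hk⟩ := (f (x + 1)).exists_nthMin_eq_map x
      have hkx : k ≤ x := ((f (x + 1)).le_nthMin k).trans (hk.trans_le ((f (x + 1)).le x))
      exact ⟨k, (hnth (hkx.trans x.le_succ)).symm.trans hk⟩)
    (fun k => by
      simpa only [hnth (((f k).le_nthMin k).trans (Nat.le_succ _))] using
        (f ((f k).nthMin k + 1)).map_nthMin k)
    (fun i => (f i).ty_nthMin i) (fun x => (f (x + 1)).perm_ty x)
  refine ⟨L, fun i => mem_nbhd_iff.2 ⟨fun x => ?_, ?_⟩⟩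
  · have hj : x < max i (x + 1) := lt_max_of_lt_right x.lt_succ_self
    have hle := map_map_of_le (hmem (le_max_left i (x + 1))).1 x
    rw [← hmap hj, ← hmap (((f i).le x).trans_lt hj)] at hle
    simpa only [hL] using hle
  · rw [hLz]
    exact (hmem hs.le_apply).2.1

end Limit

/-- The `n`-th approximation of `B` leaves room for merging: every class of a member of `[n, B]`
after the `n`-th one may be merged into one of the classes up to the `n`-th. -/
def Mergeable (n : ℕ) (B : AltRep ty σ perm) : Prop :=
  ∀ F ∈ nbhd n B, ∀ k > n, ∃ i ≤ n, ∀ x, F x = F.nthMin k → perm x (σ i)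

theorem Mergeable.of_mem_nbhd (h : Mergeable n B) (hA : A ∈ nbhd n B) : Mergeable n A :=
  fun _ hF => h _ (nbhd_subset_nbhd hA hF)

theorem Mergeable.mono (h : Mergeable n B) (hn : n ≤ m) : Mergeable m B := fun F hF k hk =>
  have ⟨i, hi, hperm⟩ := h F (nbhd_anti hn hF) k (hn.trans_lt hk)
  ⟨i, hi.trans hn, hperm⟩

/-- The `k`-th class of `A` cannot be merged into any of the classes up to the `n`-th. -/
def IsStuck (n k : ℕ) (A : AltRep ty σ perm) : Prop :=
  n < k ∧ ∀ i ≤ n, ∃ x, A x = A.nthMin k ∧ ¬ perm x (σ i)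

theorem IsStuck.exists_of_le (h : IsStuck n k A) (hF : F ≤ A) :
    ∃ j, F (A.nthMin k) = F.nthMin j ∧ IsStuck n j F := by
  obtain ⟨j, hj⟩ := F.exists_nthMin_eq_map (A.nthMin k)
  have hclass {x : ℕ} (hx : A x = A.nthMin k) : F x = F.nthMin j := by
    rw [hj, ← hx, map_map_of_le hF]
  refine ⟨j, hj.symm, ?_, fun i hi => ?_⟩
  · by_contra! hjn
    obtain ⟨x, hx, hperm⟩ := h.2 j hjn
    exact hperm (F.perm_of_map_eq (hclass hx))
  · obtain ⟨x, hx, hperm⟩ := h.2 i hi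
    exact ⟨x, hclass hx, hperm⟩

theorem exists_nbhd_subset_nbhd_of_not_mergeable (h : ¬ Mergeable n B) :
    ∃ A ∈ nbhd n B, ∃ k > n, nbhd n A ⊆ nbhd k A := by
  classical
  have hex : ∃ k, ∃ F ∈ nbhd n B, IsStuck n k F := by
    simp only [Mergeable] at h
    push Not at h
    obtain ⟨F, hF, k, hk, hstuck⟩ := h
    exact ⟨k, F, hF, hk, hstuck⟩
  obtain ⟨A, hA, hstuck⟩ := Nat.find_spec hex
  refine ⟨A, hA, Nat.find hex, hstuck.1, fun F hF => mem_nbhd_iff.2 ⟨hF.1, ?_⟩⟩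
  obtain ⟨j, hj, hjF⟩ := hstuck.exists_of_le hF.1
  have hkj : Nat.find hex ≤ j := Nat.find_min' hex ⟨F, nbhd_subset_nbhd hA hF, hjF⟩
  obtain ⟨d, hd, hdj⟩ := exists_nthMin_eq_of_le hF.1 (Nat.find hex)
  refine le_antisymm ?_ (hdj ▸ A.nthMin_strictMono.monotone hd)
  calc F.nthMin (Nat.find hex) ≤ F.nthMin j := F.nthMin_strictMono.monotone hkj
    _ = F (A.nthMin (Nat.find hex)) := hj.symm
    _ ≤ A.nthMin (Nat.find hex) := F.le _

theorem nbhd_subset_singleton (h : ∀ k, nbhd n A ⊆ nbhd k A) : nbhd n A ⊆ {A} :=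
  fun F hF => DFunLike.ext F A fun x => (h (x + 1) hF).2.map_eq x.lt_succ_self

/-- Where merging stays impossible, the members of a basic set are forced to agree on longer and
longer initial segments. -/
theorem exists_mergeable_or_singleton (n : ℕ) (B : AltRep ty σ perm) :
    ∃ A ∈ nbhd n B, nbhd n A ⊆ {A} ∨ ∃ m ≥ n, Mergeable m A ∧ nbhd n A ⊆ nbhd m A := by
  by_contra! hcon
  obtain ⟨f, -, hf⟩ := exists_seq (a := (n, B))
    (p := fun q => n ≤ q.1 ∧ q.2 ∈ nbhd n B ∧ nbhd n q.2 ⊆ nbhd q.1 q.2)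
    (r := fun _ q q' => q.1 < q'.1 ∧ q'.2 ∈ nbhd q.1 q.2)
    ⟨le_rfl, self_mem_nbhd n B, Subset.rfl⟩ fun _ ⟨m, A⟩ ⟨hm, hA, hsub⟩ => by
      obtain ⟨A', hA', k, hk, hsub'⟩ := exists_nbhd_subset_nbhd_of_not_mergeable
        fun hmerge => (hcon A hA).2 m hm hmerge hsub
      have hA'n : A' ∈ nbhd n A := nbhd_anti hm hA'
      refine ⟨(k, A'), ⟨hm.trans hk.le, nbhd_subset_nbhd hA hA'n, fun F hF => hsub' ⟨hF.1, ?_⟩⟩,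
        hk, hA'⟩
      exact (hsub (nbhd_subset_nbhd hA'n hF)).2.trans hA'.2.symm
  have hs : StrictMono fun i => (f i).1 := strictMono_nat_of_lt_succ fun i => (hf i).2.1
  obtain ⟨L, hL⟩ := exists_limit hs fun i => (hf i).2.2
  have hLn (i : ℕ) : L ∈ nbhd n (f i).2 := nbhd_anti (hf i).1.1 (hL i)
  have hLB : L ∈ nbhd n B := nbhd_subset_nbhd (hf 0).1.2.1 (hLn 0)
  refine (hcon L hLB).1 (nbhd_subset_singleton fun k F hF => nbhd_anti (hs.le_apply (x := k)) ?_)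
  exact ⟨hF.1, ((hf k).1.2.2 (nbhd_subset_nbhd (hLn k) hF)).2.trans (hL k).2.symm⟩

end Basic

section Lift

variable {ty σ : ℕ → ℕ} {perm : ℕ → ℕ → Prop} {A B : AltRep ty σ perm} {k n x : ℕ}

/-- The classes of `B` that may be merged into a class of type `t`, given by their indices. -/
def IndexPerm (B : AltRep ty σ perm) (k t : ℕ) : Prop := ∀ x, B x = B.nthMin k → perm x t

theorem indexPerm_self (B : AltRep ty σ perm) (k : ℕ) : B.IndexPerm k (σ k) :=
  fun _ hx => B.perm_of_map_eq hx

/-- The index of the class containing `x`. -/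
noncomputable def index (B : AltRep ty σ perm) (x : ℕ) : ℕ := (B.exists_nthMin_eq_map x).choose

@[simp] theorem nthMin_index (B : AltRep ty σ perm) (x : ℕ) : B.nthMin (B.index x) = B x :=
  (B.exists_nthMin_eq_map x).choose_spec

theorem index_eq_iff : B.index x = k ↔ B x = B.nthMin k := by
  rw [← nthMin_index, B.nthMin_strictMono.injective.eq_iff]

@[simp] theorem index_nthMin (B : AltRep ty σ perm) (k : ℕ) : B.index (B.nthMin k) = k :=
  index_eq_iff.2 (B.map_nthMin k)

theorem index_map (B : AltRep ty σ perm) (x : ℕ) : B.index (B x) = B.index x :=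
  index_eq_iff.2 (by rw [nthMin_index, AltRep.idem])

theorem indexPerm_index {t : ℕ} (h : B.IndexPerm (B.index x) t) : perm x t :=
  h x (B.nthMin_index x).symm

theorem exists_lift (B : AltRep ty σ perm) (F : AltRep σ σ B.IndexPerm) :
    ∃ E : AltRep ty σ perm, ⇑E = (fun x => B.nthMin (F (B.index x))) ∧
      E.nthMin = fun k => B.nthMin (F.nthMin k) :=
  exists_of_enum
    (fun x => calc B.nthMin (F (B.index x)) ≤ B.nthMin (B.index x) :=
            B.nthMin_strictMono.monotone (F.le _)
      _ = B x := B.nthMin_index x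
      _ ≤ x := B.le x)
    (B.nthMin_strictMono.comp F.nthMin_strictMono)
    (fun x => (F.exists_nthMin_eq_map (B.index x)).imp fun _ hk => congrArg B.nthMin hk)
    (fun k => by simp only [index_nthMin, map_nthMin])
    (fun k => (B.ty_nthMin _).trans (F.ty_nthMin k))
    (fun x => indexPerm_index (by simpa only [ty_nthMin] using F.perm_ty _))

/-- The coarsening of `B` that merges the classes of `B` whose indices are equivalent under `F`. -/
noncomputable def lift (B : AltRep ty σ perm) (F : AltRep σ σ B.IndexPerm) : AltRep ty σ perm :=
  (B.exists_lift F).choose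

variable {F G : AltRep σ σ B.IndexPerm}

theorem lift_apply (F : AltRep σ σ B.IndexPerm) (x : ℕ) :
    B.lift F x = B.nthMin (F (B.index x)) := congrFun (B.exists_lift F).choose_spec.1 x

theorem nthMin_lift (F : AltRep σ σ B.IndexPerm) (k : ℕ) :
    (B.lift F).nthMin k = B.nthMin (F.nthMin k) := congrFun (B.exists_lift F).choose_spec.2 k

theorem lift_le (F : AltRep σ σ B.IndexPerm) : B.lift F ≤ B :=
  fun x => by rw [lift_apply, lift_apply, index_map]

theorem lift_le_lift : B.lift F ≤ B.lift G ↔ F ≤ G := by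
  refine ⟨fun h k => B.nthMin_strictMono.injective ?_, fun h x => ?_⟩
  · simpa only [lift_apply, index_nthMin] using map_map_of_le h (B.nthMin k)
  · simp only [lift_apply, index_nthMin, map_map_of_le h]

theorem exists_lift_eq (h : A ≤ B) : ∃ F, B.lift F = A := by
  have hA (x : ℕ) : A (B.nthMin (B.index x)) = A x := by rw [nthMin_index, map_map_of_le h]
  have hB (x : ℕ) : B.nthMin (B.index (A x)) = A x := by
    rw [nthMin_index, map_eq_of_le h (A.idem x)]
  obtain ⟨F, hF, -⟩ := exists_of_enum (ty := σ) (σ := σ) (perm := B.IndexPerm)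
    (f := fun k => B.index (A (B.nthMin k))) (z := fun k => B.index (A.nthMin k))
    (fun k => B.nthMin_strictMono.le_iff_le.1 (by rw [hB]; exact A.le _))
    (fun i j hij => B.nthMin_strictMono.lt_iff_lt.1 <| by
      rw [nthMin_index, nthMin_index, map_eq_of_le h (A.map_nthMin i),
        map_eq_of_le h (A.map_nthMin j)]
      exact A.nthMin_strictMono hij)
    (fun k => (A.exists_nthMin_eq_map (B.nthMin k)).imp fun _ hi => congrArg B.index hi)
    (fun i => by simp only [hA, map_nthMin])
    (fun k => by
      rw [← B.ty_nthMin (B.index _), nthMin_index, map_eq_of_le h (A.map_nthMin k), A.ty_nthMin])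
    (fun k x hx => by
      rw [← B.ty_nthMin, hB, ← hx, map_map_of_le h]
      exact A.perm_ty x)
  exact ⟨F, DFunLike.ext _ _ fun x => by rw [lift_apply, hF, hB, hA]⟩

theorem agree_lift : Agree n (B.lift F) (B.lift G) ↔ Agree n F G := by
  simp only [Agree, nthMin_lift, B.nthMin_strictMono.injective.eq_iff]
  refine and_congr_right fun _ => ⟨fun h k hk => ?_, fun h x hx => ?_⟩
  · have hk' := h (B.nthMin_strictMono hk)
    rwa [lift_apply, lift_apply, index_nthMin, B.nthMin_strictMono.injective.eq_iff] at hk'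
  · have hx' : B.index x < G.nthMin n := B.nthMin_strictMono.lt_iff_lt.1 <| calc
      B.nthMin (B.index x) = B x := B.nthMin_index x
      _ ≤ x := B.le x
      _ < B.nthMin (G.nthMin n) := hx
    rw [lift_apply, lift_apply, h hx']

theorem lift_mem_nbhd : B.lift F ∈ nbhd n B ↔ F.nthMin n = n := by
  rw [mem_nbhd_iff, nthMin_lift, B.nthMin_strictMono.injective.eq_iff, and_iff_right (lift_le F)]

end Lift

section Amalgam

variable {σ : ℕ → ℕ} {perm : ℕ → ℕ → Prop} {A E F : AltRep σ σ perm} {d k l n x : ℕ}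

theorem map_eq_of_nthMin_eq (hE : E.nthMin n = n) (hk : k ≤ n) : E k = k := by
  rw [← apply_eq_of_strictMono E.nthMin_strictMono hE hk, map_nthMin]

/-- Thinning out `f`: the points below `d` and the points `g i` remain minima, and every other
class, with minimum `x`, is merged into the class of `m x`. -/
theorem exists_eq_splice_freeze {f g m : ℕ → ℕ} (hle : ∀ x, f x ≤ x) (hg : StrictMono g)
    (hdg : d ≤ g 0) (hfg : ∀ i, f (g i) = g i) (hσ : ∀ i, σ (g i) = σ (d + i))
    (hm : ∀ x, f x ∉ Iio d ∪ range g → m (f x) ≤ x ∧ m (f x) ∈ Iio d ∪ range g)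
    (hperm : ∀ x, perm x (σ (splice d id (freeze (Iio d ∪ range g) m ∘ f) x))) :
    ∃ E : AltRep σ σ perm, ⇑E = splice d id (freeze (Iio d ∪ range g) m ∘ f) ∧
      (∀ k < d, E.nthMin k = k) ∧ ∀ i, E.nthMin (d + i) = g i := by
  have hmem := splice_freeze_mem subset_union_left hle hm
  have hdg' (i : ℕ) : d ≤ g i := hdg.trans (hg.monotone i.zero_le)
  obtain ⟨E, hE, hEz⟩ := exists_of_enum (ty := σ) (perm := perm) (fun x => (hmem x).1)
    (strictMono_splice hg hdg)
    (fun x => by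
      rcases (hmem x).2 with hx | ⟨i, hi⟩
      · exact ⟨_, splice_of_lt _ _ hx⟩
      · exact ⟨d + i, by rw [splice_of_le _ _ (by omega), Nat.add_sub_cancel_left, hi]⟩)
    (fun k => by
      rcases lt_or_ge k d with hk | hk
      · simp only [splice_of_lt _ _ hk, id]
      · rw [splice_of_le _ _ hk, splice_of_le _ _ (hdg' _), Function.comp_apply, hfg,
          freeze_of_mem (.inr ⟨_, rfl⟩)])
    (fun k => by
      rcases lt_or_ge k d with hk | hk
      · rw [splice_of_lt _ _ hk, id]
      · rw [splice_of_le _ _ hk, hσ, Nat.add_sub_cancel' hk])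
    hperm
  refine ⟨E, hE, fun k hk => ?_, fun i => ?_⟩
  · rw [hEz, splice_of_lt _ _ hk, id]
  · rw [hEz, splice_of_le _ _ (by omega), Nat.add_sub_cancel_left]

theorem le_of_le_splice_freeze {R : AltRep σ σ perm} {Z : Set ℕ} {m : ℕ → ℕ} (hd : Iio d ⊆ Z)
    (hR : ⇑R = splice d id (freeze Z m ∘ A)) (hFR : F ≤ R) (hFA : EqOn F A (Iio d)) : F ≤ A := by
  intro x
  rcases lt_or_ge x d with hx | hx
  · rw [hFA hx, hFA ((A.le x).trans_lt hx), AltRep.idem]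
  have hRA : R (A x) = R x := by
    rcases lt_or_ge (A x) d with hAx | hAx
    · rw [hR, splice_of_lt _ _ hAx, splice_of_le _ _ hx, Function.comp_apply,
        freeze_of_mem (hd hAx), id]
    · rw [hR, splice_of_le _ _ hAx, splice_of_le _ _ hx, Function.comp_apply, AltRep.idem,
        Function.comp_apply]
  rw [← map_map_of_le hFR, hRA, map_map_of_le hFR]

theorem exists_amalgam_index (hperm : ∀ k, perm k (σ k)) (hσ : ∀ m, ∃ᶠ k in atTop, σ k = m)
    (hmerge : ∀ x, n < A x → ∃ i ≤ n, ∀ y, A y = A x → perm y (σ i)) (hl : n ≤ l) :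
    ∃ R : AltRep σ σ perm, R.nthMin (A.nthMin l) = A.nthMin l ∧ ∀ F ≤ R, Agree l F A → F ≤ A := by
  obtain ⟨c, hc, hc0, hσc⟩ := exists_strictMono_of_frequently (S := univ) (t := σ)
    (τ := fun i => σ (A.nthMin l + i)) (a := l) (by simpa only [mem_univ, true_and])
    (mem_univ l) (A.ty_nthMin l).symm
  simp only [mem_univ, true_and] at hσc
  choose! m hmn hm using fun x (hx : n < A x) => hmerge x hx
  have hg0 : (A.nthMin ∘ c) 0 = A.nthMin l := congrArg A.nthMin hc0
  generalize hd : A.nthMin l = d at *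
  set Z : Set ℕ := Iio d ∪ range (A.nthMin ∘ c)
  have hIic : Iic d ⊆ Z := fun x hx =>
    (mem_Iic.1 hx).lt_or_eq.imp id fun h => ⟨0, hg0.trans h.symm⟩
  have hnd : n ≤ d := hl.trans (hd ▸ A.le_nthMin l)
  have hlt {x : ℕ} (hx : A x ∉ Z) : n < A (A x) := by
    rw [AltRep.idem]
    exact hnd.trans_lt (not_le.1 fun h => hx (hIic h))
  obtain ⟨R, hR, -, hRd⟩ := exists_eq_splice_freeze (perm := perm) (m := m) A.le
    (A.nthMin_strictMono.comp hc) hg0.ge (fun j => A.map_nthMin _)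
    (fun j => (A.ty_nthMin _).trans (hσc j))
    (fun x hx => by
      have hmx := hmn _ (hlt hx)
      have hxn := hlt hx
      rw [AltRep.idem] at hxn
      exact ⟨(hmx.trans_lt hxn).le.trans (A.le x), hIic (hmx.trans hnd)⟩)
    (fun x => by
      rcases lt_or_ge x d with hx | hx
      · rw [splice_of_lt _ _ hx]
        exact hperm x
      rw [splice_of_le _ _ hx, Function.comp_apply]
      by_cases hAx : A x ∈ Z
      · rw [freeze_of_mem hAx]
        exact A.perm_ty x
      · rw [freeze_of_notMem hAx]
        exact hm _ (hlt hAx) x (A.idem x).symm)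
  exact ⟨R, (hRd 0).trans hg0, fun F hFR hFA =>
    le_of_le_splice_freeze subset_union_left hR hFR (hd ▸ hFA.2)⟩

end Amalgam

section Pigeonhole

variable {σ : ℕ → ℕ} {perm : ℕ → ℕ → Prop} {E F : AltRep σ σ perm} {k l : ℕ} {A : ℕ → ℕ}

open Classical in
/-- The alphabet for applying the Carlson–Simpson theorem to the next approximation: the letters
admissible at `k` are the classes up to the `l`-th into which `k` may be merged. -/
noncomputable def mergeAlphabet (hσ : ∀ m, ∃ᶠ k in atTop, σ k = m)
    (hmerge : ∀ k > l, ∃ i ≤ l, perm k (σ i)) : TypedAlphabet where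
  type := σ
  size := l + 1
  letters k := if k < l + 1 then {k} else {i ∈ Finset.range (l + 1) | perm k (σ i)}
  letters_nonempty k := by
    split_ifs with hk
    · exact Finset.singleton_nonempty k
    · obtain ⟨i, hi, hperm⟩ := hmerge k (not_lt.1 hk)
      exact ⟨i, by simpa only [Finset.mem_filter, Finset.mem_range_succ_iff] using ⟨hi, hperm⟩⟩
  lt_size {j a} ha := by
    split_ifs at ha with hj
    · rwa [Finset.mem_singleton.1 ha]
    · exact Finset.mem_range.1 (Finset.mem_filter.1 ha).1
  letters_of_lt ha := if_pos ha
  frequently_type := hσ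

variable {hσ : ∀ m, ∃ᶠ k in atTop, σ k = m} {hmerge : ∀ k > l, ∃ i ≤ l, perm k (σ i)}

theorem perm_of_mem_letters (hperm : ∀ k, perm k (σ k)) {a : ℕ}
    (ha : a ∈ (mergeAlphabet hσ hmerge).letters k) : perm k (σ a) := by
  simp only [mergeAlphabet] at ha
  split_ifs at ha
  · rw [Finset.mem_singleton.1 ha]
    exact hperm k
  · simp only [Finset.mem_filter] at ha
    exact ha.2

theorem map_mem_letters (hF : F.nthMin l = l) (hk : k < F.nthMin (l + 1)) :
    F k ∈ (mergeAlphabet hσ hmerge).letters k := by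
  simp only [mergeAlphabet]
  split_ifs with hkl
  · rw [map_eq_of_nthMin_eq hF (Nat.lt_succ_iff.1 hkl), Finset.mem_singleton]
  obtain ⟨i, hi⟩ := F.exists_nthMin_eq_map k
  have hil : i ≤ l := Nat.lt_succ_iff.1 <|
    F.nthMin_strictMono.lt_iff_lt.1 (hi.trans_lt ((F.le k).trans_lt hk))
  have hperm : perm k (σ i) := F.perm_of_map_eq hi.symm
  rw [← hi, apply_eq_of_strictMono F.nthMin_strictMono hF hil]
  simp only [Finset.mem_filter]
  exact ⟨Finset.mem_range_succ_iff.2 hil, hperm⟩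

theorem exists_isInstance_eqOn (hA : VarWord (mergeAlphabet hσ hmerge) A) (hFA : Coarser F A)
    (hF : F.nthMin l = l) :
    ∃ w, IsInstance (mergeAlphabet hσ hmerge) A w ∧ EqOn F w (Iio (F.nthMin (l + 1))) := by
  choose α hα using (mergeAlphabet hσ hmerge).letters_nonempty
  refine ⟨_, hA.isInstance_comp (α := splice (F.nthMin (l + 1)) F α) fun j => ?_, fun x hx => ?_⟩
  · rcases lt_or_ge j (F.nthMin (l + 1)) with hj | hj
    · rw [splice_of_lt _ _ hj]
      exact map_mem_letters hF hj
    · rw [splice_of_le _ _ hj]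
      exact hα j
  · rw [Function.comp_apply, splice_of_lt _ _ ((hA.le x).trans_lt hx), hFA]

theorem exists_coarser_of_infVarWord (hperm : ∀ k, perm k (σ k))
    (hA : InfVarWord (mergeAlphabet hσ hmerge) A) :
    ∃ E : AltRep σ σ perm, E.nthMin l = l ∧ Coarser E A := by
  choose α hα using (mergeAlphabet hσ hmerge).letters_nonempty
  have hαl (j : ℕ) : α j < l + 1 := (mergeAlphabet hσ hmerge).lt_size (hα j)
  have hS (m : ℕ) : ∃ᶠ k in atTop, k ∈ {k | A k = k ∧ l + 1 ≤ k} ∧ σ k = m :=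
    ((hA.frequently m).and_eventually (eventually_ge_atTop (l + 1))).mono
      fun k hk => ⟨⟨hk.1.1, hk.2⟩, hk.1.2⟩
  obtain ⟨a, ha, hσa⟩ := (hS (σ (l + 1))).exists
  obtain ⟨c, hc, -, hcS⟩ := exists_strictMono_of_frequently (τ := fun i => σ (l + 1 + i)) hS ha hσa
  obtain ⟨E, hE, hEl, -⟩ := exists_eq_splice_freeze (perm := perm) (m := α) hA.le hc (hcS 0).1.2
    (fun i => (hcS i).1.1) (fun i => (hcS i).2)
    (fun x hx => ⟨by
      have hAx : l + 1 ≤ A x := not_lt.1 fun h => hx (.inl h)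
      exact (hαl _).le.trans (hAx.trans (hA.le x)), .inl (hαl _)⟩)
    (fun x => by
      have hAperm : perm x (σ (A x)) := by
        rcases lt_or_ge (A x) (l + 1) with hAx | hAx
        · exact perm_of_mem_letters hperm (hA.letter_mem hAx)
        · have hσx : σ (A x) = σ x := hA.type_eq hAx
          rw [hσx]
          exact hperm x
      rcases lt_or_ge x (l + 1) with hx | hx
      · rw [splice_of_lt _ _ hx]
        exact hperm x
      rw [splice_of_le _ _ hx, Function.comp_apply]
      by_cases hAx : A x ∈ Iio (l + 1) ∪ range c
      · rwa [freeze_of_mem hAx]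
      · rw [freeze_of_notMem hAx]
        exact perm_of_mem_letters hperm
          (hA.letters_eq (not_lt.1 fun h => hAx (.inl h)) ▸ hα (A x)))
  refine ⟨E, hEl l l.lt_succ_self, fun x => ?_⟩
  rw [hE]
  rcases lt_or_ge x (l + 1) with hx | hx
  · rw [hA.letter hx]
  rcases lt_or_ge (A x) (l + 1) with hAx | hAx
  · rw [splice_of_lt _ _ hAx, splice_of_le _ _ hx, Function.comp_apply, freeze_of_mem (.inl hAx),
      id]
  · rw [splice_of_le _ _ hAx, splice_of_le _ _ hx, Function.comp_apply, hA.idem,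
      Function.comp_apply]

theorem exists_homogeneous_index (hperm : ∀ k, perm k (σ k))
    (hσ : ∀ m, ∃ᶠ k in atTop, σ k = m) (hmerge : ∀ k > l, ∃ i ≤ l, perm k (σ i))
    {O : Set (AltRep σ σ perm)} (hO : ∀ F G, Agree (l + 1) F G → F ∈ O → G ∈ O) :
    ∃ E : AltRep σ σ perm, E.nthMin l = l ∧
      ((∀ F ≤ E, F.nthMin l = l → F ∈ O) ∨ ∀ F ≤ E, F.nthMin l = l → F ∉ O) := by
  obtain ⟨A, hA, hD⟩ := carlson_simpson (mergeAlphabet hσ hmerge)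
    (D := fun d w => ∃ F ∈ O, F.nthMin (l + 1) = d ∧ EqOn F w (Iio d))
    (fun d w w' hw ⟨F, hFO, hFd, hFw⟩ => ⟨F, hFO, hFd, hFw.trans hw⟩) (σ (l + 1))
  obtain ⟨E, hEl, hEA⟩ := exists_coarser_of_infVarWord hperm hA
  have hfix {F : AltRep σ σ perm} (hFE : F ≤ E) : A (F.nthMin (l + 1)) = F.nthMin (l + 1) :=
    (Coarser.trans hFE hEA).fixed F.le hA.le (F.map_nthMin _)
  refine ⟨E, hEl, hD.imp (fun hD F hFE hF => ?_) fun hD F hFE hF hFO => ?_⟩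
  all_goals obtain ⟨w, hw, hFw⟩ := exists_isInstance_eqOn hA.toVarWord (Coarser.trans hFE hEA) hF
  · obtain ⟨G, hGO, hGF, hGw⟩ := hD _ (F.le_nthMin _) (hfix hFE) (F.ty_nthMin _) w hw
    exact hO G F ⟨hGF, hGw.trans hFw.symm⟩ hGO
  · exact hD _ (F.le_nthMin _) (hfix hFE) (F.ty_nthMin _) w hw ⟨F, hFO, rfl, hFw⟩

end Pigeonhole

section RamseyTheorem

variable {ty σ : ℕ → ℕ} {perm : ℕ → ℕ → Prop} {A B G : AltRep ty σ perm} {d l n N : ℕ}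

/-- Merging the superfluous classes of `A` into the classes up to the `n`-th produces a
coarsening of `B` that still has all minima of `B` up to the `d`-th. -/
theorem Mergeable.exists_amalgam (hB : Mergeable n B) (hσ : ∀ m, ∃ᶠ k in atTop, σ k = m)
    (hA : A ∈ nbhd n B) (hl : n ≤ l) (hd : A.nthMin l = B.nthMin d) :
    ∃ A' ∈ nbhd d B, basic l A A' ⊆ nbhd l A := by
  obtain ⟨A, rfl⟩ := exists_lift_eq hA.1
  have hAn : A.nthMin n = n := lift_mem_nbhd.1 hA
  obtain rfl : A.nthMin l = d := B.nthMin_strictMono.injective ((nthMin_lift A l).symm.trans hd)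
  obtain ⟨R, hRd, hR⟩ := exists_amalgam_index (n := n) B.indexPerm_self hσ (fun x hx => by
    obtain ⟨k, hk⟩ := A.exists_nthMin_eq_map x
    have hkn : n < k := A.nthMin_strictMono.lt_iff_lt.1 (by rwa [hAn, hk])
    obtain ⟨i, hi, hperm⟩ := hB _ hA k hkn
    refine ⟨i, hi, fun y hy z hz => hperm z ?_⟩
    rw [lift_apply, index_eq_iff.2 hz, nthMin_lift, hk, hy]) hl
  refine ⟨B.lift R, lift_mem_nbhd.2 hRd, fun F hF => ⟨?_, hF.2⟩⟩
  obtain ⟨F, rfl⟩ := exists_lift_eq (hF.1.trans (lift_le R))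
  exact lift_le_lift.2 (hR F (lift_le_lift.1 hF.1) (agree_lift.1 hF.2))

theorem Mergeable.exists_homogeneous (hB : Mergeable l B) (hσ : ∀ m, ∃ᶠ k in atTop, σ k = m)
    {O : Set (AltRep ty σ perm)} (hO : ∀ F G, Agree (l + 1) F G → F ∈ O → G ∈ O) :
    ∃ A ∈ nbhd l B, nbhd l A ⊆ O ∨ nbhd l A ⊆ Oᶜ := by
  obtain ⟨E, hEl, hE⟩ := exists_homogeneous_index B.indexPerm_self hσ
    (hB B (self_mem_nbhd l B)) (O := {F | B.lift F ∈ O})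
    fun F G hFG => hO _ _ (agree_lift.2 hFG)
  refine ⟨B.lift E, lift_mem_nbhd.2 hEl, hE.imp (fun hE F hF => ?_) fun hE F hF => ?_⟩
  all_goals
    obtain ⟨F, rfl⟩ := exists_lift_eq (hF.1.trans (lift_le E))
    exact hE F (lift_le_lift.1 hF.1)
      (lift_mem_nbhd.1 (nbhd_subset_nbhd (lift_mem_nbhd.2 hEl) hF))

/-! ### Fusion and the Baire property -/

theorem exists_finset_agree {S : Set (ℕ × AltRep ty σ perm)} (hS : ∀ q ∈ S, q.2.nthMin q.1 = N) :
    ∃ T : Finset (ℕ × AltRep ty σ perm), ↑T ⊆ S ∧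
      ∀ l G, (l, G) ∈ S → ∃ F, (l, F) ∈ T ∧ Agree l G F := by
  let restr (q : ℕ × AltRep ty σ perm) (x : Fin N) : Fin N := ⟨q.2 x, (q.2.le x).trans_lt x.2⟩
  obtain ⟨T, hTS, hT⟩ := exists_subset_bijOn S restr
  have hTfin : T.Finite := hT.finite_iff_finite.2 (toFinite _)
  refine ⟨hTfin.toFinset, by rwa [hTfin.coe_toFinset], fun l G hG => ?_⟩
  obtain ⟨⟨k, F⟩, hF, hFG⟩ := hT.surjOn (mem_image_of_mem restr hG)
  have hGN : G.nthMin l = N := hS _ hG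
  have hFN : F.nthMin k = N := hS _ (hTS hF)
  have heq : EqOn G F (Iio (G.nthMin l)) := fun x hx =>
    (Fin.ext_iff.1 (congrFun hFG ⟨x, hGN ▸ hx⟩)).symm
  have hagree : Agree l G F := agree_of_eqOn heq (by rw [hGN, ← hFN, map_nthMin])
  obtain rfl : k = l := F.nthMin_strictMono.injective (by rw [hFN, ← hGN, hagree.1])
  exact ⟨F, hTfin.mem_toFinset.2 hF, hagree⟩

section Fusion

variable {R : ℕ → Set (AltRep ty σ perm) → Prop}

namespace Mergeable

theorem exists_basic (hB : Mergeable n B) (hσ : ∀ m, ∃ᶠ k in atTop, σ k = m)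
    (hR : ∀ ⦃l U V⦄, U ⊆ V → R l V → R l U)
    (hex : ∀ l ≥ n, ∀ G ∈ nbhd n B, ∃ A ∈ nbhd l G, R l (nbhd l A)) (hl : n ≤ l)
    (hG : G ∈ nbhd n B) (hd : G.nthMin l = B.nthMin d) : ∃ A ∈ nbhd d B, R l (basic l G A) := by
  obtain ⟨C, hC, hRC⟩ := hex l hl G hG
  obtain ⟨A, hA, hAC⟩ := hB.exists_amalgam hσ (nbhd_subset_nbhd hG (nbhd_anti hl hC)) hl
    (hC.2.1.trans hd)
  exact ⟨A, hA, basic_congr hC.2 ▸ hR hAC hRC⟩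

theorem exists_basic_of_finset (hB : Mergeable n B) (hσ : ∀ m, ∃ᶠ k in atTop, σ k = m)
    (hR : ∀ ⦃l U V⦄, U ⊆ V → R l V → R l U)
    (hex : ∀ l ≥ n, ∀ G ∈ nbhd n B, ∃ A ∈ nbhd l G, R l (nbhd l A)) (hd : n ≤ d)
    (T : Finset (ℕ × AltRep ty σ perm)) (hT : ∀ q ∈ T, n ≤ q.1 ∧ q.2.nthMin q.1 = B.nthMin d) :
    ∃ A ∈ nbhd d B, ∀ q ∈ T, ∀ G ∈ nbhd n A, Agree q.1 G q.2 → R q.1 (basic q.1 G A) := by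
  induction T using Finset.cons_induction with
  | empty => exact ⟨B, self_mem_nbhd d B, fun q hq => absurd hq (Finset.notMem_empty q)⟩
  | cons q T _ ih =>
    obtain ⟨A₁, hA₁, hT₁⟩ := ih fun q hq => hT q (Finset.mem_cons_of_mem hq)
    obtain ⟨hqn, hqd⟩ := hT q (Finset.mem_cons_self q T)
    have hA₁B : A₁ ∈ nbhd n B := nbhd_anti hd hA₁
    by_cases hq : ∃ G ∈ nbhd n A₁, Agree q.1 G q.2
    · obtain ⟨G, hG, hGq⟩ := hq
      obtain ⟨A, hA, hRA⟩ := (hB.of_mem_nbhd hA₁B).exists_basic hσ hR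
        (fun l hl G hG => hex l hl G (nbhd_subset_nbhd hA₁B hG)) hqn hG
        ((hGq.1.trans hqd).trans hA₁.2.1.symm)
      refine ⟨A, nbhd_subset_nbhd hA₁ hA, Finset.forall_mem_cons .. |>.2 ⟨?_, ?_⟩⟩
      · exact fun G' _ hG'q => basic_congr (hGq.trans hG'q.symm) ▸ hRA
      · exact fun p hp G' hG' hG'p => hR (basic_mono hA.1)
          (hT₁ p hp G' (nbhd_subset_nbhd (nbhd_anti hd hA) hG') hG'p)
    · exact ⟨A₁, hA₁, Finset.forall_mem_cons .. |>.2
        ⟨fun G hG hGq => absurd ⟨G, hG, hGq⟩ hq, hT₁⟩⟩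

theorem exists_forall_basic_of_nthMin_eq (hB : Mergeable n B)
    (hσ : ∀ m, ∃ᶠ k in atTop, σ k = m) (hR : ∀ ⦃l U V⦄, U ⊆ V → R l V → R l U)
    (hex : ∀ l ≥ n, ∀ G ∈ nbhd n B, ∃ A ∈ nbhd l G, R l (nbhd l A)) (hd : n ≤ d) :
    ∃ A ∈ nbhd d B, ∀ l ≥ n, ∀ G ∈ nbhd n A, G.nthMin l = B.nthMin d → R l (basic l G A) := by
  obtain ⟨T, hTS, hT⟩ := exists_finset_agree (S := {q | n ≤ q.1 ∧ q.2.nthMin q.1 = B.nthMin d})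
    fun q hq => hq.2
  obtain ⟨A, hA, hTA⟩ := hB.exists_basic_of_finset hσ hR hex hd T hTS
  refine ⟨A, hA, fun l hl G hG hGd => ?_⟩
  obtain ⟨F, hF, hGF⟩ := hT l G ⟨hl, hGd⟩
  exact hTA _ hF G hG hGF

theorem fusion (hB : Mergeable n B) (hσ : ∀ m, ∃ᶠ k in atTop, σ k = m)
    (hR : ∀ ⦃l U V⦄, U ⊆ V → R l V → R l U)
    (hex : ∀ l ≥ n, ∀ G ∈ nbhd n B, ∃ A ∈ nbhd l G, R l (nbhd l A)) :
    ∃ A ∈ nbhd n B, ∀ l ≥ n, ∀ G ∈ nbhd n A, R l (basic l G A) := by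
  obtain ⟨f, hf0, hf⟩ := exists_seq (p := (· ∈ nbhd n B)) (a := B)
    (r := fun i A A' => A' ∈ nbhd (n + i) A ∧
      ∀ l ≥ n, ∀ G ∈ nbhd n A', G.nthMin l = A.nthMin (n + i) → R l (basic l G A'))
    (self_mem_nbhd n B) fun i A hA => by
      obtain ⟨A', hA', hRA'⟩ := (hB.of_mem_nbhd hA).exists_forall_basic_of_nthMin_eq hσ hR
        (fun l hl G hG => hex l hl G (nbhd_subset_nbhd hA hG)) (n.le_add_right i)
      exact ⟨A', nbhd_subset_nbhd hA (nbhd_anti (n.le_add_right i) hA'), hA', hRA'⟩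
  obtain ⟨A, hA⟩ := exists_limit (s := (n + ·)) (fun i j hij => Nat.add_lt_add_left hij n)
    fun i => (hf i).2.1
  have hAn (i : ℕ) : A ∈ nbhd n (f i) := nbhd_anti (n.le_add_right i) (hA i)
  refine ⟨A, hf0 ▸ hAn 0, fun l hl G hG => ?_⟩
  obtain ⟨d, hd, hGd⟩ := exists_nthMin_eq_of_le hG.1 l
  obtain ⟨i, rfl⟩ := Nat.exists_eq_add_of_le (hl.trans hd)
  exact hR (basic_mono (hAn (i + 1)).1)
    ((hf i).2.2 l hl G (nbhd_subset_nbhd (hAn (i + 1)) hG) (hGd.trans (hA i).2.1))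

end Mergeable

end Fusion

theorem exists_nbhd_of_mergeable {Φ : Set (AltRep ty σ perm) → Prop}
    (hΦ : ∀ ⦃U V⦄, U ⊆ V → Φ V → Φ U) (hsingle : ∀ n A, nbhd n A ⊆ {A} → Φ (nbhd n A))
    (hmerge : ∀ n B, Mergeable n B → ∃ A ∈ nbhd n B, Φ (nbhd n A)) (n : ℕ)
    (B : AltRep ty σ perm) : ∃ A ∈ nbhd n B, Φ (nbhd n A) := by
  obtain ⟨A, hA, hsub | ⟨m, hm, hmA, hsub⟩⟩ := exists_mergeable_or_singleton n B
  · exact ⟨A, hA, hsingle n A hsub⟩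
  obtain ⟨A', hA', hΦA'⟩ := hmerge m A hmA
  have hA'n : A' ∈ nbhd n A := nbhd_anti hm hA'
  have hsub' : nbhd n A' ⊆ nbhd m A' := fun F hF =>
    ⟨hF.1, (hsub (nbhd_subset_nbhd hA'n hF)).2.trans hA'.2.symm⟩
  exact ⟨A', nbhd_subset_nbhd hA hA'n, hΦ hsub' hΦA'⟩

section Open

variable {X : Set (AltRep ty σ perm)}

/-- No member `A` of `U` satisfies `nbhd l A ⊆ X`. For `U = basic l G A` this is rejection of the
`l`-th approximation of `G` by `A` in the combinatorial forcing for `X`. -/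
def Rejects (X : Set (AltRep ty σ perm)) (l : ℕ) (U : Set (AltRep ty σ perm)) : Prop :=
  ∀ A ∈ U, ¬ nbhd l A ⊆ X

theorem Mergeable.exists_decided (hB : Mergeable n B) (hσ : ∀ m, ∃ᶠ k in atTop, σ k = m)
    (X : Set (AltRep ty σ perm)) :
    ∃ A ∈ nbhd n B, ∀ l ≥ n, ∀ G ∈ nbhd n A, basic l G A ⊆ X ∨ Rejects X l (basic l G A) := by
  refine hB.fusion hσ (R := fun l U => U ⊆ X ∨ Rejects X l U)
    (fun l U V hUV => Or.imp hUV.trans fun hV A hA => hV A (hUV hA)) fun l _ G _ => ?_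
  by_cases hG : Rejects X l (nbhd l G)
  · exact ⟨G, self_mem_nbhd l G, .inr hG⟩
  · simp only [Rejects, not_forall, not_not] at hG
    obtain ⟨A, hA, hAX⟩ := hG
    exact ⟨A, hA, .inl hAX⟩

theorem Mergeable.exists_rejects_succ (hA : Mergeable n A) (hσ : ∀ m, ∃ᶠ k in atTop, σ k = m)
    (hdec : ∀ l ≥ n, ∀ G ∈ nbhd n A, basic l G A ⊆ X ∨ Rejects X l (basic l G A)) (hl : n ≤ l)
    (hG : G ∈ nbhd n A) :
    ∃ A' ∈ nbhd l G, ∀ F ∈ nbhd l A', Rejects X l (basic l F A) →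
      Rejects X (l + 1) (basic (l + 1) F A) := by
  obtain ⟨A', hA', hrej | hacc⟩ := ((hA.of_mem_nbhd hG).mono hl).exists_homogeneous hσ
    (O := {F | Rejects X (l + 1) (basic (l + 1) F A)})
    fun F F' hFF' hF => by rwa [mem_ofPred_eq, ← basic_congr hFF']
  · exact ⟨A', hA', fun F hF _ => hrej hF⟩
  have hA'n : A' ∈ nbhd n A := nbhd_subset_nbhd hG (nbhd_anti hl hA')
  have hA'X : nbhd l A' ⊆ X := fun F hF => by
    have hFn : F ∈ nbhd n A := nbhd_subset_nbhd hA'n (nbhd_anti hl hF)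
    exact (hdec (l + 1) (hl.trans l.le_succ) F hFn).resolve_right (hacc hF) ⟨hFn.1, .rfl⟩
  exact ⟨A', hA', fun F hF hrej => absurd hA'X (hrej A' ⟨hA'n.1, hF.2.symm⟩)⟩

theorem Mergeable.exists_subset_or_subset_compl (hB : Mergeable n B)
    (hσ : ∀ m, ∃ᶠ k in atTop, σ k = m) (hX : ∀ F ∈ X, ∃ k, nbhd k F ⊆ X) :
    ∃ A ∈ nbhd n B, nbhd n A ⊆ X ∨ nbhd n A ⊆ Xᶜ := by
  obtain ⟨C, hC, hdec⟩ := hB.exists_decided hσ X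
  rcases hdec n le_rfl C (self_mem_nbhd n C) with hacc | hrej
  · exact ⟨C, hC, .inl hacc⟩
  have hCmerge : Mergeable n C := hB.of_mem_nbhd hC
  obtain ⟨A, hA, hsucc⟩ := hCmerge.fusion hσ
    (R := fun l U => ∀ F ∈ U, Rejects X l (basic l F C) → Rejects X (l + 1) (basic (l + 1) F C))
    (fun l U V hUV hV F hF => hV F (hUV hF))
    fun l hl G hG => hCmerge.exists_rejects_succ hσ hdec hl hG
  have hall (l : ℕ) (hl : n ≤ l) (F) (hF : F ∈ nbhd n A) : Rejects X l (basic l F C) := by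
    induction l, hl using Nat.le_induction with
    | base => exact basic_congr (nbhd_subset_nbhd hA hF).2 ▸ hrej
    | succ l hl ih => exact hsucc l hl F hF F ⟨hF.1, .rfl⟩ ih
  refine ⟨A, nbhd_subset_nbhd hC hA, .inr fun F hF hFX => ?_⟩
  obtain ⟨k, hk⟩ := hX F hFX
  exact hall (max n k) (le_max_left n k) F hF F ⟨hF.1.trans hA.1, .rfl⟩
    ((nbhd_anti (le_max_right n k)).trans hk)

theorem exists_subset_or_subset_compl (hσ : ∀ m, ∃ᶠ k in atTop, σ k = m)
    (hX : ∀ F ∈ X, ∃ k, nbhd k F ⊆ X) (n : ℕ) (B : AltRep ty σ perm) :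
    ∃ A ∈ nbhd n B, nbhd n A ⊆ X ∨ nbhd n A ⊆ Xᶜ := by
  refine exists_nbhd_of_mergeable (Φ := fun U => U ⊆ X ∨ U ⊆ Xᶜ)
    (fun U V hUV => Or.imp hUV.trans hUV.trans) (fun n A hA => ?_)
    (fun n B hB => hB.exists_subset_or_subset_compl hσ hX) n B
  exact (em (A ∈ X)).imp (fun h => hA.trans (singleton_subset_iff.2 h))
    fun h => hA.trans (singleton_subset_iff.2 h)

end Open

section Ideal

variable {Y : ℕ → Set (AltRep ty σ perm)}

theorem exists_forall_lt_subset_compl (hY : ∀ j n B, ∃ A ∈ nbhd n B, nbhd n A ⊆ (Y j)ᶜ) (l m : ℕ)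
    (B : AltRep ty σ perm) : ∃ A ∈ nbhd l B, ∀ j < m, nbhd l A ⊆ (Y j)ᶜ := by
  induction m with
  | zero => exact ⟨B, self_mem_nbhd l B, fun j hj => absurd hj j.not_lt_zero⟩
  | succ m ih =>
    obtain ⟨C, hC, hCY⟩ := ih
    obtain ⟨A, hA, hAY⟩ := hY m l C
    refine ⟨A, nbhd_subset_nbhd hC hA, fun j hj => ?_⟩
    rcases Nat.lt_succ_iff_lt_or_eq.1 hj with hj | rfl
    exacts [(nbhd_subset_nbhd hA).trans (hCY j hj), hAY]

theorem Mergeable.exists_subset_compl_iUnion (hB : Mergeable n B)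
    (hσ : ∀ m, ∃ᶠ k in atTop, σ k = m) (hY : ∀ j n B, ∃ A ∈ nbhd n B, nbhd n A ⊆ (Y j)ᶜ) :
    ∃ A ∈ nbhd n B, nbhd n A ⊆ (⋃ j, Y j)ᶜ := by
  obtain ⟨A, hA, hAY⟩ := hB.fusion hσ (R := fun l U => ∀ j < l + 1, U ⊆ (Y j)ᶜ)
    (fun l U V hUV hV j hj => hUV.trans (hV j hj))
    fun l _ G _ => exists_forall_lt_subset_compl hY l (l + 1) G
  refine ⟨A, hA, fun F hF hFY => ?_⟩
  obtain ⟨j, hj⟩ := mem_iUnion.1 hFY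
  exact hAY (max n j) (le_max_left n j) F hF j (Nat.lt_succ_of_le (le_max_right n j))
    ⟨hF.1, .rfl⟩ hj

theorem exists_subset_compl_iUnion (hσ : ∀ m, ∃ᶠ k in atTop, σ k = m)
    (hY : ∀ j n B, ∃ A ∈ nbhd n B, nbhd n A ⊆ (Y j)ᶜ) (n : ℕ) (B : AltRep ty σ perm) :
    ∃ A ∈ nbhd n B, nbhd n A ⊆ (⋃ j, Y j)ᶜ := by
  refine exists_nbhd_of_mergeable (Φ := (· ⊆ (⋃ j, Y j)ᶜ)) (fun U V hUV => hUV.trans)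
    (fun n A hA F hF hFY => ?_) (fun n B hB => hB.exists_subset_compl_iUnion hσ hY) n B
  obtain ⟨j, hj⟩ := mem_iUnion.1 hFY
  obtain ⟨C, hC, hCY⟩ := hY j n A
  obtain rfl : F = A := hA hF
  obtain rfl : C = F := hA hC
  exact hCY (self_mem_nbhd n C) hj

end Ideal

end RamseyTheorem

end AltRep

/-- Every `N n B` contains a smaller `N n A` that is contained in `X` or disjoint from it. -/
def IsDecided {T : Type*} (N : ℕ → T → Set T) (X : Set T) : Prop :=
  ∀ n B, ∃ A ∈ N n B, N n A ⊆ X ∨ N n A ⊆ Xᶜ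

/-- Every `N n B` contains a smaller `N n A` that is disjoint from `X`. -/
def IsAvoided {T : Type*} (N : ℕ → T → Set T) (X : Set T) : Prop :=
  ∀ n B, ∃ A ∈ N n B, N n A ⊆ Xᶜ

section Transfer

variable {S T : Type*} {N : ℕ → T → Set T} {X : Set T}

theorem isDecided_preimage (e : S ≃ T) :
    IsDecided (fun n B => e ⁻¹' N n (e B)) (e ⁻¹' X) ↔ IsDecided N X := by
  simp only [IsDecided, e.surjective.forall, e.surjective.exists, mem_preimage, ← preimage_compl,
    e.preimage_subset]

theorem isAvoided_preimage (e : S ≃ T) :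
    IsAvoided (fun n B => e ⁻¹' N n (e B)) (e ⁻¹' X) ↔ IsAvoided N X := by
  simp only [IsAvoided, e.surjective.forall, e.surjective.exists, mem_preimage, ← preimage_compl,
    e.preimage_subset]

end Transfer

/-- What the characterization of Baire sets uses of the basic neighbourhoods `N n A = [r_n(A), A]`
of a topological Ramsey space. -/
structure IsEllentuckSystem {T : Type*} [TopologicalSpace T] (N : ℕ → T → Set T) : Prop where
  self_mem : ∀ n A, A ∈ N n A
  subset : ∀ {n A B}, A ∈ N n B → N n A ⊆ N n B
  isOpen_iff : ∀ {O : Set T}, IsOpen O ↔ ∀ F ∈ O, ∃ n, N n F ⊆ O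
  isDecided : ∀ {O : Set T}, IsOpen O → IsDecided N O
  isAvoided_iUnion : ∀ {Y : ℕ → Set T}, (∀ j, IsAvoided N (Y j)) → IsAvoided N (⋃ j, Y j)

namespace IsEllentuckSystem

variable {T : Type*} [TopologicalSpace T] {N : ℕ → T → Set T} {X : Set T}

theorem isOpen (hN : IsEllentuckSystem N) (n : ℕ) (A : T) : IsOpen (N n A) :=
  hN.isOpen_iff.2 fun _ hF => ⟨n, hN.subset hF⟩

theorem isNowhereDense_of_isAvoided (hN : IsEllentuckSystem N) (hX : IsAvoided N X) :
    IsNowhereDense X := by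
  refine eq_empty_iff_forall_notMem.2 fun F hF => ?_
  obtain ⟨n, hn⟩ := hN.isOpen_iff.1 isOpen_interior F hF
  obtain ⟨A, hA, hAX⟩ := hX n F
  obtain ⟨G, hG, hGX⟩ := mem_closure_iff.1 (interior_subset (hn hA)) _ (hN.isOpen n A)
    (hN.self_mem n A)
  exact hAX hG hGX

theorem isAvoided_of_isNowhereDense (hN : IsEllentuckSystem N) (hX : IsNowhereDense X) :
    IsAvoided N X := fun n B => by
  obtain ⟨A, hA, hAX⟩ := hN.isDecided isClosed_closure.isOpen_compl n B
  refine ⟨A, hA, (hAX.resolve_right fun hsub => ?_).trans (compl_subset_compl.2 subset_closure)⟩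
  have hAint : A ∈ interior (closure X) :=
    interior_maximal (hsub.trans (compl_compl _).subset) (hN.isOpen n A) (hN.self_mem n A)
  have hempty : interior (closure X) = ∅ := hX
  exact (hempty ▸ hAint : A ∈ (∅ : Set T))

theorem isMeagre_iff (hN : IsEllentuckSystem N) : IsMeagre X ↔ IsAvoided N X := by
  refine ⟨fun hX => ?_, fun hX => (hN.isNowhereDense_of_isAvoided hX).isMeagre⟩
  obtain ⟨𝒮, h𝒮, hcount, hsub⟩ := isMeagre_iff_countable_union_isNowhereDense.1 hX
  obtain ⟨Y, hY⟩ := (hcount.insert ∅).exists_eq_range (insert_nonempty _ _)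
  have hYnd (j : ℕ) : IsNowhereDense (Y j) := by
    rcases (hY ▸ mem_range_self j : Y j ∈ insert ∅ 𝒮) with h | h
    · exact h ▸ isNowhereDense_empty
    · exact h𝒮 _ h
  have hXY : X ⊆ ⋃ j, Y j :=
    hsub.trans ((sUnion_subset_sUnion (subset_insert _ _)).trans (hY ▸ sUnion_range Y).subset)
  intro n B
  obtain ⟨A, hA, hAY⟩ :=
    hN.isAvoided_iUnion (fun j => hN.isAvoided_of_isNowhereDense (hYnd j)) n B
  exact ⟨A, hA, hAY.trans (compl_subset_compl.2 hXY)⟩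

theorem exists_isOpen_isMeagre_iff (hN : IsEllentuckSystem N) :
    (∃ O M : Set T, IsOpen O ∧ IsMeagre M ∧ X = (O \ M) ∪ (M \ O)) ↔ IsDecided N X := by
  constructor
  · rintro ⟨O, M, hO, hM, rfl⟩ n B
    obtain ⟨A, hA, hAM⟩ := hN.isMeagre_iff.1 hM n B
    obtain ⟨C, hC, hCO⟩ := hN.isDecided hO n A
    have hCM : N n C ⊆ Mᶜ := (hN.subset hC).trans hAM
    exact ⟨C, hN.subset hA hC, hCO.imp (fun h F hF => .inl ⟨h hF, hCM hF⟩)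
      fun h F hF => by grind⟩
  · intro hX
    refine ⟨interior X, X \ interior X, isOpen_interior, hN.isMeagre_iff.2 fun n B => ?_, ?_⟩
    · obtain ⟨A, hA, hAX | hAX⟩ := hX n B
      · exact ⟨A, hA, fun F hF hFX => hFX.2 (interior_maximal hAX (hN.isOpen n A) hF)⟩
      · exact ⟨A, hA, fun F hF hFX => hAX hF hFX.1⟩
    · have hint : interior X ⊆ X := interior_subset
      grind

end IsEllentuckSystem

/-! ### The space `𝓔^{P,I}_∞` -/

theorem frequently_sigmaSeq_eq (m : ℕ) : ∃ᶠ k in atTop, sigmaSeq k = m := by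
  refine frequently_atTop.2 fun n => ?_
  have hpos : 0 < 2 ^ m * (2 * n + 1) := by positivity
  have hle : 1 * (2 * n + 1) ≤ 2 ^ m * (2 * n + 1) := Nat.mul_le_mul_right _ Nat.one_le_two_pow
  refine ⟨2 ^ m * (2 * n + 1) - 1, by lia, ?_⟩
  rw [sigmaSeq, Nat.sub_add_cancel hpos, padicValNat.mul (by positivity) (by lia),
    padicValNat.prime_pow, padicValNat.eq_zero_of_not_dvd (by lia), add_zero]

/-- The least element of the class of `x`. -/
noncomputable def minRep (E : Setoid ℕ) (x : ℕ) : ℕ := sInf {y | E.r x y}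

section MinRep

variable {E F : Setoid ℕ} {m n x y : ℕ}

theorem rel_minRep (E : Setoid ℕ) (x : ℕ) : E.r x (minRep E x) :=
  Nat.sInf_mem (s := {y | E.r x y}) ⟨x, E.refl x⟩

theorem minRep_le_of_rel (h : E.r x y) : minRep E x ≤ y := Nat.sInf_le h

theorem minRep_le (E : Setoid ℕ) (x : ℕ) : minRep E x ≤ x := minRep_le_of_rel (E.refl x)

theorem rel_iff_minRep_eq : E.r x y ↔ minRep E x = minRep E y := by
  refine ⟨fun h => le_antisymm ?_ ?_, fun h => ?_⟩
  · exact minRep_le_of_rel (E.trans h (rel_minRep E y))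
  · exact minRep_le_of_rel (E.trans (E.symm h) (rel_minRep E x))
  · exact E.trans (h ▸ rel_minRep E x) (E.symm (rel_minRep E y))

theorem minRep_minRep (E : Setoid ℕ) (x : ℕ) : minRep E (minRep E x) = minRep E x :=
  (rel_iff_minRep_eq.1 (rel_minRep E x)).symm

theorem minRep_injective : Function.Injective minRep := fun _ _ h =>
  Setoid.ext fun _ _ => rel_iff_minRep_eq.trans (h ▸ rel_iff_minRep_eq.symm)

theorem minRep_ker {f : ℕ → ℕ} (hle : ∀ x, f x ≤ x) (hidem : ∀ x, f (f x) = f x) :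
    minRep (Setoid.ker f) = f := by
  funext x
  have hx : f x = f (minRep (Setoid.ker f) x) := rel_minRep (Setoid.ker f) x
  exact le_antisymm (minRep_le_of_rel (hidem x).symm) (hx.trans_le (hle _))

theorem mem_minReps_iff : x ∈ minReps E ↔ minRep E x = x :=
  ⟨fun h => le_antisymm (minRep_le E x) (h _ (rel_minRep E x)),
    fun h _ hy => h ▸ minRep_le_of_rel hy⟩

theorem pRep_eq_nth (E : Setoid ℕ) (k : ℕ) : pRep E k = Nat.nth (fun x => minRep E x = x) k :=
  congrArg (Nat.nth · k) (funext fun _ => propext mem_minReps_iff)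

theorem infinite_classes_iff : (classes E).Infinite ↔ {x | minRep E x = x}.Infinite := by
  have himage : classes E = (fun x => {y | E.r x y}) '' {x | minRep E x = x} := by
    ext C
    constructor
    · rintro ⟨x, rfl⟩
      refine ⟨minRep E x, minRep_minRep E x, ?_⟩
      simp only [rel_iff_minRep_eq, minRep_minRep]
    · rintro ⟨x, -, rfl⟩
      exact ⟨x, rfl⟩
  rw [himage]
  refine infinite_image_iff fun x hx y hy hxy => ?_
  have hrel : E.r x y := (hxy ▸ E.refl y : y ∈ {z | E.r x z})
  exact hx.symm.trans ((rel_iff_minRep_eq.1 hrel).trans hy)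

theorem coarsens_iff_coarser : Coarsens F E ↔ Coarser (minRep F) (minRep E) := by
  refine ⟨fun h x => (rel_iff_minRep_eq.1 (h _ _ (rel_minRep E x))).symm, fun h x y hxy => ?_⟩
  rw [rel_iff_minRep_eq, ← h x, rel_iff_minRep_eq.1 hxy, h y]

theorem approx_eq_approx_iff : approx m F = approx n E ↔
    pRep F m = pRep E n ∧ EqOn (minRep F) (minRep E) (Iio (pRep E n)) := by
  constructor
  · intro h
    have hmem (x y : ℕ) : (x < pRep F m ∧ y < pRep F m ∧ F.r x y) ↔
        (x < pRep E n ∧ y < pRep E n ∧ E.r x y) := Set.ext_iff.1 h (x, y)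
    have hlt (x : ℕ) : x < pRep F m ↔ x < pRep E n :=
      ⟨fun hx => ((hmem x x).1 ⟨hx, hx, F.refl x⟩).1, fun hx => ((hmem x x).2 ⟨hx, hx, E.refl x⟩).1⟩
    refine ⟨eq_of_forall_lt_iff hlt, fun x hx => le_antisymm ?_ ?_⟩
    · exact minRep_le_of_rel
        ((hmem x _).2 ⟨hx, (minRep_le E x).trans_lt hx, rel_minRep E x⟩).2.2
    · have hx' := (hlt x).2 hx
      exact minRep_le_of_rel
        ((hmem x _).1 ⟨hx', (minRep_le F x).trans_lt hx', rel_minRep F x⟩).2.2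
  · rintro ⟨hp, hmin⟩
    ext ⟨x, y⟩
    simp only [approx, mem_ofPred_eq, hp]
    refine and_congr_right fun hx => and_congr_right fun hy => ?_
    rw [rel_iff_minRep_eq, rel_iff_minRep_eq, hmin hx, hmin hy]

end MinRep

section EPaltI

variable {P I : ℕ → Set ℕ} {ty : ℕ → ℕ}

/-- An equivalence relation in `𝓔^{P,I}_∞` is determined by its map to least representatives. -/
noncomputable def equivAltRep (hty : ∀ x n, x ∈ P n ↔ ty x = n) :
    EPaltI P I ≃ AltRep ty sigmaSeq fun x t => ty x ∈ I t where
  toFun E :=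
    { toFun := minRep E.1
      le' := minRep_le E.1
      idem' := minRep_minRep E.1
      infinite_fixed' := infinite_classes_iff.1 E.2.1.1
      ty_nth' := fun k => (hty _ _).1 (pRep_eq_nth E.1 k ▸ E.2.1.2 k)
      perm_ty' := fun x => by
        obtain ⟨m, hm, hx⟩ := E.2.2 _ (mem_minReps_iff.2 (minRep_minRep E.1 x)) _ ((hty _ _).2 rfl)
          x (E.1.symm (rel_minRep E.1 x))
        exact (hty _ _).1 hx ▸ hm }
  invFun F := ⟨Setoid.ker F, by
    have hker : minRep (Setoid.ker F) = F := minRep_ker F.le F.idem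
    refine ⟨⟨infinite_classes_iff.2 ?_, fun k => ?_⟩, fun x hx n hn y hxy => ?_⟩
    · rw [hker]
      exact F.infinite_fixed
    · rw [hty, pRep_eq_nth, hker]
      exact F.ty_nthMin k
    · refine ⟨ty y, ?_, (hty _ _).2 rfl⟩
      have hy : F y = x := (hxy : F x = F y).symm.trans (hker ▸ mem_minReps_iff.1 hx)
      simpa only [hy, (hty _ _).1 hn] using F.perm_ty y⟩
  left_inv E := Subtype.ext (minRep_injective (minRep_ker (minRep_le E.1) (minRep_minRep E.1)))
  right_inv F := DFunLike.coe_injective (minRep_ker F.le F.idem)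

/-- The basic neighbourhood `[r_n(B), B]` of `B`. -/
noncomputable def basicNhd (n : ℕ) (B : EPaltI P I) : Set (EPaltI P I) :=
  basicSet (EPaltI P I) (approx n B.1) B

variable {X : Set (EPaltI P I)} {F G B : EPaltI P I} {a : Set (ℕ × ℕ)} {k m n : ℕ}

theorem nthMin_equivAltRep (hty : ∀ x n, x ∈ P n ↔ ty x = n) (F : EPaltI P I) (k : ℕ) :
    (equivAltRep hty F).nthMin k = pRep F.1 k :=
  (pRep_eq_nth F.1 k).symm

theorem coarsens_iff_le (hty : ∀ x n, x ∈ P n ↔ ty x = n) :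
    Coarsens F.1 G.1 ↔ equivAltRep hty F ≤ equivAltRep hty G :=
  coarsens_iff_coarser

theorem approx_eq_iff_agree (hty : ∀ x n, x ∈ P n ↔ ty x = n) :
    approx m F.1 = approx n G.1 ↔
      m = n ∧ (equivAltRep hty F).Agree n (equivAltRep hty G) := by
  rw [approx_eq_approx_iff, ← nthMin_equivAltRep hty, ← nthMin_equivAltRep hty]
  refine ⟨fun ⟨hnth, heq⟩ => ?_, fun ⟨hmn, h⟩ => hmn ▸ h⟩
  obtain rfl : m = n := (equivAltRep hty G).nthMin_strictMono.injective <|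
    (AltRep.nthMin_eq_of_eqOn (hnth ▸ heq) (hnth ▸ AltRep.map_nthMin _ _)).trans hnth
  exact ⟨rfl, hnth, heq⟩

theorem basicSet_approx (hty : ∀ x n, x ∈ P n ↔ ty x = n) (n : ℕ) (G B : EPaltI P I) :
    basicSet (EPaltI P I) (approx n G.1) B =
      equivAltRep hty ⁻¹' AltRep.basic n (equivAltRep hty G) (equivAltRep hty B) := by
  ext F
  refine and_congr (coarsens_iff_le hty) ?_
  simp only [approx_eq_iff_agree hty, exists_eq_left]

theorem basicNhd_eq (hty : ∀ x n, x ∈ P n ↔ ty x = n) (n : ℕ) (B : EPaltI P I) :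
    basicNhd n B = equivAltRep hty ⁻¹' AltRep.nbhd n (equivAltRep hty B) :=
  basicSet_approx hty n B B

noncomputable instance : TopologicalSpace (EPaltI P I) := ellentuckTop (EPaltI P I)

theorem exists_basicNhd_subset (hty : ∀ x n, x ∈ P n ↔ ty x = n)
    (hF : F ∈ basicSet (EPaltI P I) a B) :
    ∃ n, approx n F.1 = a ∧ basicNhd n F ⊆ basicSet (EPaltI P I) a B := by
  obtain ⟨hFB, n, rfl⟩ := hF
  refine ⟨n, rfl, ?_⟩
  rw [basicNhd, basicSet_approx hty, basicSet_approx hty]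
  exact preimage_mono (AltRep.basic_mono ((coarsens_iff_le hty).1 hFB))

theorem self_mem_basicNhd (n : ℕ) (F : EPaltI P I) : F ∈ basicNhd n F :=
  ⟨fun _ _ h => h, n, rfl⟩

theorem basicNhd_subset_basicNhd (hty : ∀ x n, x ∈ P n ↔ ty x = n) (hF : F ∈ basicNhd n B) :
    basicNhd n F ⊆ basicNhd n B := by
  rw [basicNhd_eq hty] at hF ⊢
  rw [basicNhd_eq hty]
  exact preimage_mono (AltRep.nbhd_subset_nbhd hF)

theorem basicNhd_anti (hty : ∀ x n, x ∈ P n ↔ ty x = n) (h : k ≤ n) :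
    basicNhd n F ⊆ basicNhd k F := by
  rw [basicNhd_eq hty, basicNhd_eq hty]
  exact preimage_mono (AltRep.nbhd_anti h)

theorem isTopologicalBasis_basicSet (hty : ∀ x n, x ∈ P n ↔ ty x = n) :
    TopologicalSpace.IsTopologicalBasis {U | ∃ a E, U = basicSet (EPaltI P I) a E} where
  exists_subset_inter := by
    rintro _ ⟨a, A, rfl⟩ _ ⟨b, B, rfl⟩ F ⟨hFA, hFB⟩
    obtain ⟨k, -, hk⟩ := exists_basicNhd_subset hty hFA
    obtain ⟨l, -, hl⟩ := exists_basicNhd_subset hty hFB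
    refine ⟨_, ⟨_, _, rfl⟩, self_mem_basicNhd (max k l) F, subset_inter ?_ ?_⟩
    · exact (basicNhd_anti hty (le_max_left k l)).trans hk
    · exact (basicNhd_anti hty (le_max_right k l)).trans hl
  sUnion_eq := eq_univ_of_forall fun F => ⟨_, ⟨_, _, rfl⟩, self_mem_basicNhd 0 F⟩
  eq_generateFrom := rfl

theorem isOpen_iff_basicNhd (hty : ∀ x n, x ∈ P n ↔ ty x = n) :
    IsOpen X ↔ ∀ F ∈ X, ∃ n, basicNhd n F ⊆ X := by
  rw [(isTopologicalBasis_basicSet hty).isOpen_iff]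
  refine forall₂_congr fun F _ => ⟨?_, fun ⟨n, hn⟩ => ⟨_, ⟨_, _, rfl⟩, self_mem_basicNhd n F, hn⟩⟩
  rintro ⟨_, ⟨a, B, rfl⟩, hF, hX⟩
  obtain ⟨n, -, hn⟩ := exists_basicNhd_subset hty hF
  exact ⟨n, hn.trans hX⟩

theorem isEllentuckSystem_basicNhd (hty : ∀ x n, x ∈ P n ↔ ty x = n) :
    IsEllentuckSystem (basicNhd (P := P) (I := I)) where
  self_mem := self_mem_basicNhd
  subset := basicNhd_subset_basicNhd hty
  isOpen_iff := isOpen_iff_basicNhd hty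
  isDecided {O} hO := by
    rw [isOpen_iff_basicNhd hty] at hO
    obtain ⟨X, rfl⟩ := (equivAltRep hty).injective.preimage_surjective O
    have hN : (basicNhd : ℕ → EPaltI P I → _) = _ := funext₂ (basicNhd_eq hty)
    simp only [hN, Equiv.preimage_subset] at hO
    rw [hN, isDecided_preimage]
    exact AltRep.exists_subset_or_subset_compl frequently_sigmaSeq_eq
      ((equivAltRep hty).surjective.forall.2 hO)
  isAvoided_iUnion {Y} hY := by
    choose Z hZ using fun j => (equivAltRep hty).injective.preimage_surjective (Y j)
    obtain rfl : (fun j => equivAltRep hty ⁻¹' Z j) = Y := funext hZ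
    have hN : (basicNhd : ℕ → EPaltI P I → _) = _ := funext₂ (basicNhd_eq hty)
    simp only [hN, isAvoided_preimage] at hY
    rw [hN, ← preimage_iUnion, isAvoided_preimage]
    exact AltRep.exists_subset_compl_iUnion frequently_sigmaSeq_eq hY

theorem forall_basicSet_iff_forall_basicNhd (hty : ∀ x n, x ∈ P n ↔ ty x = n)
    {Φ : Set (EPaltI P I) → Prop} :
    (∀ a B, (basicSet (EPaltI P I) a B).Nonempty →
      ∃ A ∈ basicSet (EPaltI P I) a B, Φ (basicSet (EPaltI P I) a A)) ↔
    ∀ n B, ∃ A ∈ basicNhd n B, Φ (basicNhd (P := P) (I := I) n A) := by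
  have happrox {n : ℕ} {A B : EPaltI P I} (hA : A ∈ basicNhd n B) :
      approx n A.1 = approx n B.1 := by
    rw [basicNhd_eq hty] at hA
    exact (approx_eq_iff_agree hty).2 ⟨rfl, hA.2⟩
  constructor
  · intro h n B
    obtain ⟨A, hA, hΦ⟩ := h (approx n B.1) B ⟨B, self_mem_basicNhd n B⟩
    exact ⟨A, hA, by rwa [basicNhd, happrox hA]⟩
  · rintro h a B ⟨F, hF⟩
    obtain ⟨n, rfl, hn⟩ := exists_basicNhd_subset hty hF
    obtain ⟨A, hA, hΦ⟩ := h n F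
    exact ⟨A, hn hA, happrox hA ▸ hΦ⟩

theorem isRamsey_iff_isDecided (hty : ∀ x n, x ∈ P n ↔ ty x = n) :
    IsRamsey (EPaltI P I) X ↔ IsDecided basicNhd X := by
  simp only [IsDecided, subset_compl_iff_disjoint_right, disjoint_iff_inter_eq_empty]
  exact forall_basicSet_iff_forall_basicNhd hty (Φ := fun U => U ⊆ X ∨ U ∩ X = ∅)

theorem isRamseyNull_iff_isAvoided (hty : ∀ x n, x ∈ P n ↔ ty x = n) :
    IsRamseyNull (EPaltI P I) X ↔ IsAvoided basicNhd X := by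
  simp only [IsAvoided, subset_compl_iff_disjoint_right, disjoint_iff_inter_eq_empty]
  exact forall_basicSet_iff_forall_basicNhd hty (Φ := fun U => U ∩ X = ∅)

end EPaltI

theorem EPaltIIsTopologicalRamseySpace_general
    (P : ℕ → Set ℕ)
    (hdisj : ∀ i j, i ≠ j → Disjoint (P i) (P j))
    (hcov : ⋃ i, P i = Set.univ)
    (I : ℕ → Set ℕ)
    (X : Set ↥(EPaltI P I)) :
    (HasBP (EPaltI P I) X ↔ IsRamsey (EPaltI P I) X) ∧
    (@IsMeagre _ (ellentuckTop (EPaltI P I)) X ↔ IsRamseyNull (EPaltI P I) X) := by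
  have hex (x : ℕ) : ∃ n, x ∈ P n := mem_iUnion.1 (hcov ▸ mem_univ x)
  choose ty hmem using hex
  have hty (x n : ℕ) : x ∈ P n ↔ ty x = n := by
    refine ⟨fun hx => ?_, fun h => h ▸ hmem x⟩
    by_contra hne
    exact disjoint_left.1 (hdisj _ _ hne) (hmem x) hx
  have hN := isEllentuckSystem_basicNhd (I := I) hty
  rw [isRamsey_iff_isDecided hty, isRamseyNull_iff_isAvoided hty]
  exact ⟨hN.exists_isOpen_isMeagre_iff, hN.isMeagre_iff⟩

/-- **Theorem 5.3:** `(𝓔^{P,I}_∞, ≤, r)` is a topological Ramsey space. -/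
theorem EPaltIIsTopologicalRamseySpace
    (P : ℕ → Set ℕ)
    (hinf : ∀ i, (P i).Infinite)
    (hdisj : ∀ i j, i ≠ j → Disjoint (P i) (P j))
    (hcov : ⋃ i, P i = Set.univ)
    (hmin : ∀ i j : ℕ, i < j → sInf (P i) < sInf (P j))
    (I : ℕ → Set ℕ) (hI : ∀ n, n ∈ I n)
    (X : Set ↥(EPaltI P I)) :
    (HasBP (EPaltI P I) X ↔ IsRamsey (EPaltI P I) X) ∧
    (@IsMeagre _ (ellentuckTop (EPaltI P I)) X ↔ IsRamseyNull (EPaltI P I) X) :=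
  EPaltIIsTopologicalRamseySpace_general P hdisj hcov I X

end DualRamsey
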